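/- arXiv:2405.00729 — 2 statements merged into one kernel-verified Lean document; each statement's English description precedes it below -/
import Mathlib

section
/- Let (A, {Δ(λ)}) be a split quasi-hereditary algebra over a commutative Noetherian ring R. If M ∈ F(Δ̃) satisfies Ext^1_A(M, ⊕_{λ∈Λ} Δ(λ)) = 0, then M is a projective A-module. Dually, if N ∈ F(∇̃) satisfies Ext^1_A(⊕_{λ∈Λ} ∇(λ), N) = 0, then N is (A,R)-injective, i.e., N ∈ add DA. -/
open scoped TensorProduct
open CategoryTheory

noncomputable section

section Core

variable (R : Type) [CommRing R] (A : Type) [Ring A] [Algebra R A]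

/-- The action of `a : A` on an `A`-module as an `R`-linear endomorphism. -/
def actL (M : Type) [AddCommGroup M] [Module R M] [Module A M] [IsScalarTower R A M]
    (a : A) : M →ₗ[R] M where
  toFun m := a • m
  map_add' := smul_add a
  map_smul' r m := (smul_comm r a m).symm

/-- The right `A`-module (i.e. `Aᵐᵒᵖ`-module) structure on the `R`-linear dual of a left
`A`-module `M`, given by `(aᵒᵖ • f) m = f (a • m)`. -/
instance dualModule (M : Type) [AddCommGroup M] [Module R M] [Module A M]
    [IsScalarTower R A M] : Module Aᵐᵒᵖ (M →ₗ[R] R) where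
  smul a f := f.comp (actL R A M a.unop)
  one_smul f := by ext m; show f ((1 : Aᵐᵒᵖ).unop • m) = f m; simp
  mul_smul a b f := by
    ext m
    show f ((a * b).unop • m) = f (b.unop • a.unop • m)
    simp [mul_smul]
  smul_zero a := rfl
  smul_add a f g := rfl
  add_smul a b f := by
    ext m
    show f ((a + b).unop • m) = f (a.unop • m) + f (b.unop • m)
    simp [add_smul]
  zero_smul f := by ext m; show f ((0 : Aᵐᵒᵖ).unop • m) = 0; simp

@[simp] lemma dualModule_smul_apply (M : Type) [AddCommGroup M] [Module R M] [Module A M]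
    [IsScalarTower R A M] (a : Aᵐᵒᵖ) (f : M →ₗ[R] R) (m : M) :
    (a • f) m = f (a.unop • m) := rfl

instance dualTower (M : Type) [AddCommGroup M] [Module R M] [Module A M]
    [IsScalarTower R A M] : IsScalarTower R Aᵐᵒᵖ (M →ₗ[R] R) := by
  constructor
  intro r a f
  ext m
  show f ((r • a).unop • m) = r • f (a.unop • m)
  rw [MulOpposite.unop_smul, smul_assoc, map_smul]

/-- The left `A`-module structure on the `R`-linear dual of a right `A`-module
(i.e. an `Aᵐᵒᵖ`-module) `M`, given by `(a • f) m = f (aᵒᵖ • m)`. -/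
instance dualModule' (M : Type) [AddCommGroup M] [Module R M] [Module Aᵐᵒᵖ M]
    [IsScalarTower R Aᵐᵒᵖ M] : Module A (M →ₗ[R] R) where
  smul a f := f.comp (actL R Aᵐᵒᵖ M (MulOpposite.op a))
  one_smul f := by ext m; show f (MulOpposite.op (1 : A) • m) = f m; simp
  mul_smul a b f := by
    ext m
    show f (MulOpposite.op (a * b) • m) = f (MulOpposite.op b • MulOpposite.op a • m)
    rw [MulOpposite.op_mul, mul_smul]
  smul_zero a := rfl
  smul_add a f g := rfl
  add_smul a b f := by
    ext m
    show f (MulOpposite.op (a + b) • m) = f (MulOpposite.op a • m) + f (MulOpposite.op b • m)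
    rw [MulOpposite.op_add, add_smul, map_add]
  zero_smul f := by ext m; show f (MulOpposite.op (0 : A) • m) = 0; simp

@[simp] lemma dualModule'_smul_apply (M : Type) [AddCommGroup M] [Module R M] [Module Aᵐᵒᵖ M]
    [IsScalarTower R Aᵐᵒᵖ M] (a : A) (f : M →ₗ[R] R) (m : M) :
    (a • f) m = f (MulOpposite.op a • m) := rfl

instance dualTower' (M : Type) [AddCommGroup M] [Module R M] [Module Aᵐᵒᵖ M]
    [IsScalarTower R Aᵐᵒᵖ M] : IsScalarTower R A (M →ₗ[R] R) := by
  constructor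
  intro r a f
  ext m
  show f (MulOpposite.op (r • a) • m) = r • f (MulOpposite.op a • m)
  rw [MulOpposite.op_smul, smul_assoc, map_smul]

variable (Λ : Type) [Fintype Λ] [PartialOrder Λ]

/-- Data witnessing that `X` is isomorphic to `Δ(λ) ⊗_R U` for some `λ ∈ S` and some finitely
generated projective `R`-module `U`. -/
structure TensorFactor (Δ : Λ → Type) [∀ l, AddCommGroup (Δ l)] [∀ l, Module R (Δ l)]
    [∀ l, Module A (Δ l)] [∀ l, IsScalarTower R A (Δ l)]
    (S : Set Λ) (X : Type) [AddCommGroup X] [Module A X] : Type 1 where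
  lam : Λ
  mem : lam ∈ S
  U : ModuleCat.{0} R
  fin : Module.Finite R U
  proj : Module.Projective R U
  iso : X ≃ₗ[A] (TensorProduct R (Δ lam) U)

/-- `M` belongs to `F(Δ̃_S)`: it is a finitely generated `A`-module with a finite filtration
whose factors are of the form `Δ(λ) ⊗_R U`, `λ ∈ S`, `U` a finitely generated projective
`R`-module. -/
def InFilt (Δ : Λ → Type) [∀ l, AddCommGroup (Δ l)] [∀ l, Module R (Δ l)]
    [∀ l, Module A (Δ l)] [∀ l, IsScalarTower R A (Δ l)]
    (S : Set Λ) (M : Type) [AddCommGroup M] [Module A M] : Prop :=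
  Module.Finite A M ∧
  ∃ (n : ℕ) (c : Fin (n + 1) → Submodule A M), c 0 = ⊥ ∧ c (Fin.last n) = ⊤ ∧ Monotone c ∧
    ∀ i : Fin n, Nonempty (TensorFactor R A Λ Δ S
      (↥(c i.succ) ⧸ (Submodule.comap (c i.succ).subtype (c i.castSucc))))

/-- Data witnessing that `X` is isomorphic to `F(λ)` for some `λ ∈ S`. -/
structure PlainFactor (F : Λ → Type) [∀ l, AddCommGroup (F l)] [∀ l, Module A (F l)]
    (S : Set Λ) (X : Type) [AddCommGroup X] [Module A X] : Type 1 where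
  lam : Λ
  mem : lam ∈ S
  iso : X ≃ₗ[A] F lam

/-- `M` has a finite filtration with factors among the modules `F(λ)`, `λ ∈ S`. -/
def InFiltPlain (F : Λ → Type) [∀ l, AddCommGroup (F l)] [∀ l, Module A (F l)]
    (S : Set Λ) (M : Type) [AddCommGroup M] [Module A M] : Prop :=
  Module.Finite A M ∧
  ∃ (n : ℕ) (c : Fin (n + 1) → Submodule A M), c 0 = ⊥ ∧ c (Fin.last n) = ⊤ ∧ Monotone c ∧
    ∀ i : Fin n, Nonempty (PlainFactor A Λ F S
      (↥(c i.succ) ⧸ (Submodule.comap (c i.succ).subtype (c i.castSucc))))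

/-- `X` is a direct summand of `Y` (as `A`-modules). -/
def IsDirectSummand (X Y : Type) [AddCommGroup X] [Module A X] [AddCommGroup Y]
    [Module A Y] : Prop :=
  ∃ (i : X →ₗ[A] Y) (p : Y →ₗ[A] X), p.comp i = LinearMap.id

/-- `X` belongs to the additive closure `add T`. -/
def InAdd (T : Type) [AddCommGroup T] [Module A T] (X : Type) [AddCommGroup X]
    [Module A X] : Prop :=
  ∃ n : ℕ, IsDirectSummand A X (Fin n → T)

/-- A split quasi-hereditary structure on the `R`-algebra `A` with standard modules
`Δ(λ)`, `λ ∈ Λ` (following Rouquier's module-theoretic definition). -/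
structure SplitQH (Δ : Λ → Type) [∀ l, AddCommGroup (Δ l)] [∀ l, Module R (Δ l)]
    [∀ l, Module A (Δ l)] [∀ l, IsScalarTower R A (Δ l)] : Type 1 where
  algFin : Module.Finite R A
  algProj : Module.Projective R A
  deltaFinA : ∀ l, Module.Finite A (Δ l)
  deltaFinR : ∀ l, Module.Finite R (Δ l)
  deltaProjR : ∀ l, Module.Projective R (Δ l)
  hom_le : ∀ l m : Λ, (∃ f : Δ l →ₗ[A] Δ m, f ≠ 0) → l ≤ m
  endIso : ∀ l, Nonempty ((Module.End A (Δ l)) ≃ₐ[R] R)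
  P : Λ → ModuleCat.{0} A
  P_proj : ∀ l, Module.Projective A (P l)
  P_fin : ∀ l, Module.Finite A (P l)
  epi : ∀ l, (P l : Type) →ₗ[A] Δ l
  epi_surj : ∀ l, Function.Surjective (epi l)
  ker_filt : ∀ l, InFilt R A Λ Δ {m | l < m} ↥(LinearMap.ker (epi l))
  add_gen : ∀ (Q : ModuleCat.{0} A), Module.Finite A Q → Module.Projective A Q →
    InAdd A (∀ l, (P l : Type)) Q

/-- Vanishing of `Ext^i_A(M, N)` (computed in the abelian category of `A`-modules). -/
def extVanish (M : Type) [AddCommGroup M] [Module A M] (N : Type) [AddCommGroup N]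
    [Module A N] (i : ℕ) : Prop :=
  Subsingleton (((Ext ℤ (ModuleCat.{0} A) i).obj
    (Opposite.op (ModuleCat.of A M))).obj (ModuleCat.of A N))

/-- `∇` is a family of costandard modules for the split quasi-hereditary algebra
`(A, {Δ(λ)})`: the `R`-linear duals `D∇(λ)` make `A^op` split quasi-hereditary (with the same
poset), and the `Ext`-orthogonality relations with the standard modules hold. -/
def IsCostandard (Δ : Λ → Type) [∀ l, AddCommGroup (Δ l)] [∀ l, Module R (Δ l)]
    [∀ l, Module A (Δ l)] [∀ l, IsScalarTower R A (Δ l)]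
    (N : Λ → Type) [∀ l, AddCommGroup (N l)] [∀ l, Module R (N l)]
    [∀ l, Module A (N l)] [∀ l, IsScalarTower R A (N l)] : Prop :=
  Nonempty (SplitQH R Aᵐᵒᵖ Λ (fun l => (N l →ₗ[R] R))) ∧
  (∀ l, Nonempty ((Δ l →ₗ[A] N l) ≃ₗ[R] R)) ∧
  (∀ l m, l ≠ m → ∀ f : Δ l →ₗ[A] N m, f = 0) ∧
  (∀ l m : Λ, ∀ i : ℕ, 0 < i → extVanish A (Δ l) (N m) i)

/-- A bundled family of costandard modules. -/
structure CostandardFamily (Δ : Λ → Type) [∀ l, AddCommGroup (Δ l)] [∀ l, Module R (Δ l)]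
    [∀ l, Module A (Δ l)] [∀ l, IsScalarTower R A (Δ l)] : Type 1 where
  Nab : Λ → Type
  [acg : ∀ l, AddCommGroup (Nab l)]
  [modR : ∀ l, Module R (Nab l)]
  [modA : ∀ l, Module A (Nab l)]
  [tower : ∀ l, IsScalarTower R A (Nab l)]
  cost : IsCostandard R A Λ Δ Nab

attribute [instance] CostandardFamily.acg CostandardFamily.modR CostandardFamily.modA
  CostandardFamily.tower

/-- `T` is a family of (partial) tilting modules forming a characteristic tilting module
`⊕ T(λ)`: each `T(λ)` admits an exact sequence `0 → Δ(λ) → T(λ) → X(λ) → 0` with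
`X(λ) ∈ F(Δ̃_{μ<λ})` and an exact sequence `0 → Y(λ) → T(λ) → ∇(λ) → 0` with
`Y(λ) ∈ F(∇̃_{μ<λ})`. -/
def IsCharTilting (Δ : Λ → Type) [∀ l, AddCommGroup (Δ l)] [∀ l, Module R (Δ l)]
    [∀ l, Module A (Δ l)] [∀ l, IsScalarTower R A (Δ l)]
    (N : Λ → Type) [∀ l, AddCommGroup (N l)] [∀ l, Module R (N l)]
    [∀ l, Module A (N l)] [∀ l, IsScalarTower R A (N l)]
    (T : Λ → Type) [∀ l, AddCommGroup (T l)] [∀ l, Module A (T l)] : Prop :=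
  ∀ l : Λ,
    (∃ f : Δ l →ₗ[A] T l, Function.Injective f ∧
      InFilt R A Λ Δ {m | m < l} ((T l) ⧸ LinearMap.range f)) ∧
    (∃ g : T l →ₗ[A] N l, Function.Surjective g ∧
      InFilt R A Λ N {m | m < l} ↥(LinearMap.ker g))

end Core

end

noncomputable section

/-!
Call `X` filtered if it lies in the closure of the standard modules under extensions and direct
summands. If `Ext¹(M, Δ(λ)) = 0` for all `λ`, then `Ext¹(M, X) = 0` for every filtered `X`; since
`Δ(λ)` is a quotient of the projective `P(λ)` by a filtered module, every map `M → Δ(λ)` factors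
through a projective module. As projectives are `Ext`-acyclic, this property passes through
extensions to all maps `M → X` with `X` filtered. If `M` itself is filtered, then `id_M` factors
through a projective module.

The argument for `N` is dual, with the summands of powers of `DA` in place of the projectives. The
sequences `0 → ∇(λ) → D P(λ) → D K(λ) → 0` it needs are the duals of the standard presentations over
`Aᵐᵒᵖ`. They are exact and begin in `∇(λ)` because `∇(λ)` is finitely generated projective over `R`:
`A` is filtered by standard modules, so `∇(λ) = Hom_A(A, ∇(λ))` is an iterated extension of summands
of `Hom_A(Δ(μ), ∇(λ))`, which is `R` or `0`.
-/

section ExtVanishing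

universe w v u

variable {C : Type u} [Category.{v} C] [Abelian C] [HasExt.{w} C]

lemma subsingleton_ext_of_retract {X X' Y Y' : C} {n : ℕ} (hX : Retract X X')
    (hY : Retract Y Y') [Subsingleton (Abelian.Ext X' Y' n)] :
    Subsingleton (Abelian.Ext X Y n) := by
  refine subsingleton_of_forall_eq 0 fun x => ?_
  have hx : (Abelian.Ext.mk₀ hX.i).comp (((Abelian.Ext.mk₀ hX.r).comp
      (x.comp (Abelian.Ext.mk₀ hY.i) (add_zero n)) (zero_add n)).comp
        (Abelian.Ext.mk₀ hY.r) (add_zero n)) (zero_add n) = x := by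
    simp [Abelian.Ext.comp_assoc_of_third_deg_zero]
  rw [← hx, Subsingleton.elim ((Abelian.Ext.mk₀ hX.r).comp _ _) 0]
  simp

variable {S : ShortComplex C}

lemma subsingleton_ext_of_shortExact_right (hS : S.ShortExact) (X : C) (n : ℕ)
    [Subsingleton (Abelian.Ext X S.X₁ n)] [Subsingleton (Abelian.Ext X S.X₃ n)] :
    Subsingleton (Abelian.Ext X S.X₂ n) := by
  refine subsingleton_of_forall_eq 0 fun x => ?_
  obtain ⟨y, rfl⟩ := Abelian.Ext.covariant_sequence_exact₂ X hS x (Subsingleton.elim _ _)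
  rw [Subsingleton.elim y 0, Abelian.Ext.zero_comp]

lemma subsingleton_ext_of_shortExact_left (hS : S.ShortExact) (Y : C) (n : ℕ)
    [Subsingleton (Abelian.Ext S.X₁ Y n)] [Subsingleton (Abelian.Ext S.X₃ Y n)] :
    Subsingleton (Abelian.Ext S.X₂ Y n) := by
  refine subsingleton_of_forall_eq 0 fun x => ?_
  obtain ⟨y, rfl⟩ := Abelian.Ext.contravariant_sequence_exact₂ hS Y x (Subsingleton.elim _ _)
  rw [Subsingleton.elim y 0, Abelian.Ext.comp_zero]

lemma exists_comp_g_eq_of_subsingleton_ext (hS : S.ShortExact) {X : C}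
    [Subsingleton (Abelian.Ext X S.X₁ 1)] (φ : X ⟶ S.X₃) : ∃ ψ : X ⟶ S.X₂, ψ ≫ S.g = φ := by
  obtain ⟨x, hx⟩ := Abelian.Ext.covariant_sequence_exact₃ X hS (Abelian.Ext.mk₀ φ) (zero_add 1)
    (Subsingleton.elim _ _)
  obtain ⟨ψ, rfl⟩ := Abelian.Ext.homEquiv₀.symm.surjective x
  exact ⟨ψ, Abelian.Ext.homEquiv₀.symm.injective (by simpa using hx)⟩

lemma exists_f_comp_eq_of_subsingleton_ext (hS : S.ShortExact) {Y : C}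
    [Subsingleton (Abelian.Ext S.X₃ Y 1)] (φ : S.X₁ ⟶ Y) : ∃ ψ : S.X₂ ⟶ Y, S.f ≫ ψ = φ := by
  obtain ⟨x, hx⟩ := Abelian.Ext.contravariant_sequence_exact₁ hS Y (Abelian.Ext.mk₀ φ)
    (add_zero 1) (Subsingleton.elim _ _)
  obtain ⟨ψ, rfl⟩ := Abelian.Ext.homEquiv₀.symm.surjective x
  exact ⟨ψ, Abelian.Ext.homEquiv₀.symm.injective (by simpa using hx)⟩

lemma subsingleton_ext_one_of_forall_exists_f_comp_eq (hS : S.ShortExact) [Projective S.X₂]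
    {Y : C} (hY : ∀ φ : S.X₁ ⟶ Y, ∃ ψ : S.X₂ ⟶ Y, S.f ≫ ψ = φ) :
    Subsingleton (Abelian.Ext S.X₃ Y 1) := by
  refine subsingleton_of_forall_eq 0 fun x => ?_
  obtain ⟨y, rfl⟩ := Abelian.Ext.contravariant_sequence_exact₃ hS Y x
    (Abelian.Ext.eq_zero_of_projective _) (add_zero 1)
  obtain ⟨φ, rfl⟩ := Abelian.Ext.homEquiv₀.symm.surjective y
  obtain ⟨ψ, rfl⟩ := hY φ
  simp [← Abelian.Ext.mk₀_comp_mk₀]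

lemma subsingleton_ext_of_isZero_Ext {k : Type*} [Ring k] [Linear k C] [EnoughProjectives C]
    {X Y : C} {n : ℕ} (h : Limits.IsZero (((Ext k C (n + 1)).obj (.op X)).obj Y)) :
    Subsingleton (Abelian.Ext X Y (n + 1)) := by
  refine subsingleton_of_forall_eq 0 fun x => ?_
  let P := ProjectiveResolution.of X
  have hexact : (P.complex.linearYonedaObj k Y).ExactAt (n + 1) := by
    rw [HomologicalComplex.exactAt_iff_isZero_homology]
    exact h.of_iso (P.isoExt (n + 1) Y).symm
  rw [HomologicalComplex.exactAt_iff' _ n (n + 1) (n + 2) (by simp) (by simp),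
    ShortComplex.moduleCat_exact_iff] at hexact
  obtain ⟨f, hf, rfl⟩ := P.extMk_surjective x (n + 2) rfl
  exact (P.extMk_eq_zero_iff f _ _ hf n rfl).mpr (hexact f hf)

end ExtVanishing

lemma extVanish.subsingleton_ext {A : Type} [Ring A] {M N : Type} [AddCommGroup M] [Module A M]
    [AddCommGroup N] [Module A N] {n : ℕ} (h : extVanish A M N (n + 1)) :
    Subsingleton (Abelian.Ext (ModuleCat.of A M) (ModuleCat.of A N) (n + 1)) :=
  subsingleton_ext_of_isZero_Ext (k := ℤ)
    (have : Subsingleton _ := h; ModuleCat.isZero_of_subsingleton _)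

section Factorization

variable {C : Type*} [Category* C] (Q : ObjectProperty C) {M X Y : C}

/-- The morphism `f` factors through an object of `Q`; for `Q` the projective objects this says
that `f` becomes zero in the stable category. -/
def FactorsThroughObject (f : M ⟶ X) : Prop :=
  ∃ (J : C) (_ : Q J) (g : M ⟶ J) (h : J ⟶ X), g ≫ h = f

namespace FactorsThroughObject

variable {Q}

lemma comp_right {f : M ⟶ X} (hf : FactorsThroughObject Q f) (h : X ⟶ Y) :
    FactorsThroughObject Q (f ≫ h) := by
  obtain ⟨J, hJ, a, b, rfl⟩ := hf
  exact ⟨J, hJ, a, b ≫ h, by simp⟩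

lemma comp_left {f : X ⟶ Y} (hf : FactorsThroughObject Q f) (h : M ⟶ X) :
    FactorsThroughObject Q (h ≫ f) := by
  obtain ⟨J, hJ, a, b, rfl⟩ := hf
  exact ⟨J, hJ, h ≫ a, b, by simp⟩

lemma exists_retract (h : FactorsThroughObject Q (𝟙 X)) : ∃ J, Q J ∧ Nonempty (Retract X J) := by
  obtain ⟨J, hJ, i, r, hir⟩ := h
  exact ⟨J, hJ, ⟨⟨i, r, hir⟩⟩⟩

end FactorsThroughObject

end Factorization

section ExtensionRetractClosure

universe w v u

variable {C : Type u} [Category.{v} C] [Abelian C] (P Q : ObjectProperty C)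

lemma isClosedUnderFiniteProducts_of_isClosedUnderExtensions [P.ContainsZero]
    [P.IsClosedUnderIsomorphisms] [P.IsClosedUnderExtensions] :
    P.IsClosedUnderFiniteProducts :=
  have : P.IsClosedUnderBinaryProducts := ⟨by
    rintro X ⟨p⟩
    refine P.prop_of_iso ?_ (P.prop_biprod (p.prop_diag_obj (.mk .left))
      (p.prop_diag_obj (.mk .right)))
    exact (Limits.BinaryBiproduct.isLimit _ _).conePointUniqueUpToIso
      ((Limits.IsLimit.postcomposeHomEquiv (Limits.diagramIsoPair p.diag) _).2 p.isLimit)⟩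
  .mk'

/-- The smallest class of objects containing `P` and the zero objects and closed under extensions
and direct summands. For `P` the family of standard modules `Δ(λ)` it contains `F(Δ̃)`. -/
inductive extensionRetractClosure : ObjectProperty C
  | of_prop {X : C} (hX : P X) : extensionRetractClosure X
  | of_isZero {X : C} (hX : Limits.IsZero X) : extensionRetractClosure X
  | of_shortExact {S : ShortComplex C} (hS : S.ShortExact) (h₁ : extensionRetractClosure S.X₁)
      (h₃ : extensionRetractClosure S.X₃) : extensionRetractClosure S.X₂
  | of_retract {X Y : C} (r : Retract X Y) (hY : extensionRetractClosure Y) :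
      extensionRetractClosure X

namespace extensionRetractClosure

instance : (extensionRetractClosure P).ContainsZero where
  exists_zero := ⟨_, Limits.isZero_zero C, of_isZero (Limits.isZero_zero C)⟩

instance : (extensionRetractClosure P).IsStableUnderRetracts where
  of_retract := of_retract

instance : (extensionRetractClosure P).IsClosedUnderExtensions where
  prop_X₂_of_shortExact := of_shortExact

instance : (extensionRetractClosure P).IsClosedUnderFiniteProducts :=
  isClosedUnderFiniteProducts_of_isClosedUnderExtensions _

variable {P}

lemma subsingleton_ext_right [HasExt.{w} C] {M X : C} {n : ℕ} (hX : extensionRetractClosure P X)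
    (hP : ∀ D, P D → Subsingleton (Abelian.Ext M D n)) : Subsingleton (Abelian.Ext M X n) := by
  induction hX with
  | of_prop hX => exact hP _ hX
  | of_isZero hX =>
    refine subsingleton_of_forall_eq 0 fun x => ?_
    rw [← x.comp_mk₀_id, hX.eq_of_src (𝟙 _) 0, Abelian.Ext.mk₀_zero, Abelian.Ext.comp_zero]
  | of_shortExact hS _ _ _ _ => exact subsingleton_ext_of_shortExact_right hS M n
  | of_retract r _ _ => exact subsingleton_ext_of_retract (.refl M) r

lemma subsingleton_ext_left [HasExt.{w} C] {X N : C} {n : ℕ} (hX : extensionRetractClosure P X)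
    (hP : ∀ D, P D → Subsingleton (Abelian.Ext D N n)) : Subsingleton (Abelian.Ext X N n) := by
  induction hX with
  | of_prop hX => exact hP _ hX
  | of_isZero hX =>
    refine subsingleton_of_forall_eq 0 fun x => ?_
    rw [← x.mk₀_id_comp, hX.eq_of_src (𝟙 _) 0, Abelian.Ext.mk₀_zero, Abelian.Ext.zero_comp]
  | of_shortExact hS _ _ _ _ => exact subsingleton_ext_of_shortExact_left hS N n
  | of_retract r _ _ => exact subsingleton_ext_of_retract r (.refl N)

end extensionRetractClosure

namespace FactorsThroughObject

variable {P Q} {M X : C}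

lemma add (hQ : ∀ {J J' : C}, Q J → Q J' → Q (J ⊞ J')) {f g : M ⟶ X}
    (hf : FactorsThroughObject Q f) (hg : FactorsThroughObject Q g) :
    FactorsThroughObject Q (f + g) := by
  obtain ⟨J, hJ, a, b, rfl⟩ := hf
  obtain ⟨J', hJ', a', b', rfl⟩ := hg
  exact ⟨J ⊞ J', hQ hJ hJ', Limits.biprod.lift a a', Limits.biprod.desc b b', by simp⟩

end FactorsThroughObject

/-- `Q` provides enough `Ext`-projectives for the closure of `P` under extensions and direct
summands: the objects of `Q` are `Ext¹`-acyclic against `P`, and every object of `P` is the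
quotient of an object of `Q` by an object of the closure. The projective modules over a split
quasi-hereditary algebra play this role for the standard modules. -/
structure EnoughExtProjectives [HasExt.{w} C] : Prop where
  isZero {Z : C} (hZ : Limits.IsZero Z) : Q Z
  biprod {J J' : C} (hJ : Q J) (hJ' : Q J') : Q (J ⊞ J')
  subsingleton_ext {J D : C} (hJ : Q J) (hD : P D) : Subsingleton (Abelian.Ext J D 1)
  exists_shortExact {D : C} (hD : P D) : ∃ (K J : C) (i : K ⟶ J) (p : J ⟶ D) (w : i ≫ p = 0),
    (ShortComplex.mk i p w).ShortExact ∧ extensionRetractClosure P K ∧ Q J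

/-- The dual of `EnoughExtProjectives`; the relatively injective modules play this role for the
costandard modules. -/
structure EnoughExtInjectives [HasExt.{w} C] : Prop where
  isZero {Z : C} (hZ : Limits.IsZero Z) : Q Z
  biprod {J J' : C} (hJ : Q J) (hJ' : Q J') : Q (J ⊞ J')
  subsingleton_ext {J D : C} (hD : P D) (hJ : Q J) : Subsingleton (Abelian.Ext D J 1)
  exists_shortExact {D : C} (hD : P D) : ∃ (J K : C) (i : D ⟶ J) (p : J ⟶ K) (w : i ≫ p = 0),
    (ShortComplex.mk i p w).ShortExact ∧ Q J ∧ extensionRetractClosure P K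

variable {P Q} [HasExt.{w} C]

lemma EnoughExtProjectives.factorsThroughObject (h : EnoughExtProjectives.{w} P Q) {M X : C}
    (hM : ∀ D, P D → Subsingleton (Abelian.Ext M D 1)) (hX : extensionRetractClosure P X)
    (f : M ⟶ X) : FactorsThroughObject Q f := by
  induction hX with
  | @of_prop D hD =>
    obtain ⟨K, J, i, p, w, hS, hK, hJ⟩ := h.exists_shortExact hD
    have := hK.subsingleton_ext_right hM
    obtain ⟨g, hg⟩ := exists_comp_g_eq_of_subsingleton_ext hS f
    exact ⟨J, hJ, g, p, hg⟩
  | of_isZero hX => exact ⟨_, h.isZero hX, f, 𝟙 _, by simp⟩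
  | @of_shortExact S hS h₁ _ ih₁ ih₃ =>
    obtain ⟨J, hJ, a, b, hab⟩ := ih₃ (f ≫ S.g)
    have := hS.mono_f
    have := h₁.subsingleton_ext_right fun D => h.subsingleton_ext hJ
    obtain ⟨c, hc⟩ := exists_comp_g_eq_of_subsingleton_ext hS b
    have hg : (f - a ≫ c) ≫ S.g = 0 := by simp [hc, hab]
    have hdiff : FactorsThroughObject Q (f - a ≫ c) := by
      simpa only [hS.exact.lift_f] using (ih₁ (hS.exact.lift _ hg)).comp_right S.f
    simpa using hdiff.add h.biprod ⟨J, hJ, a, c, rfl⟩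
  | of_retract r _ ih => simpa using (ih (f ≫ r.i)).comp_right r.r

lemma EnoughExtInjectives.factorsThroughObject (h : EnoughExtInjectives.{w} P Q) {X N : C}
    (hN : ∀ D, P D → Subsingleton (Abelian.Ext D N 1)) (hX : extensionRetractClosure P X)
    (f : X ⟶ N) : FactorsThroughObject Q f := by
  induction hX with
  | @of_prop D hD =>
    obtain ⟨J, K, i, p, w, hS, hJ, hK⟩ := h.exists_shortExact hD
    have := hK.subsingleton_ext_left hN
    obtain ⟨g, hg⟩ := exists_f_comp_eq_of_subsingleton_ext hS f
    exact ⟨J, hJ, i, g, hg⟩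
  | of_isZero hX => exact ⟨_, h.isZero hX, 𝟙 _, f, by simp⟩
  | @of_shortExact S hS _ h₃ ih₁ ih₃ =>
    obtain ⟨J, hJ, a, b, hab⟩ := ih₁ (S.f ≫ f)
    have := hS.epi_g
    have := h₃.subsingleton_ext_left fun D hD => h.subsingleton_ext hD hJ
    obtain ⟨c, hc⟩ := exists_f_comp_eq_of_subsingleton_ext hS a
    have hf : S.f ≫ (f - c ≫ b) = 0 := by simp [reassoc_of% hc, hab]
    have hdiff : FactorsThroughObject Q (f - c ≫ b) := by
      simpa only [hS.exact.g_desc] using (ih₃ (hS.exact.desc _ hf)).comp_left S.g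
    simpa using hdiff.add h.biprod ⟨J, hJ, c, b, rfl⟩
  | of_retract r _ ih => simpa using (ih (r.r ≫ f)).comp_left r.i

theorem EnoughExtProjectives.exists_retract (h : EnoughExtProjectives.{w} P Q) {M : C}
    (hM : extensionRetractClosure P M) (hext : ∀ D, P D → Subsingleton (Abelian.Ext M D 1)) :
    ∃ J, Q J ∧ Nonempty (Retract M J) :=
  (h.factorsThroughObject hext hM (𝟙 M)).exists_retract

theorem EnoughExtInjectives.exists_retract (h : EnoughExtInjectives.{w} P Q) {N : C}
    (hN : extensionRetractClosure P N) (hext : ∀ D, P D → Subsingleton (Abelian.Ext D N 1)) :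
    ∃ J, Q J ∧ Nonempty (Retract N J) :=
  (h.factorsThroughObject hext hN (𝟙 N)).exists_retract

end ExtensionRetractClosure

section ModuleCat

variable {A : Type} [Ring A] {X Y Z : Type} [AddCommGroup X] [Module A X] [AddCommGroup Y]
  [Module A Y] [AddCommGroup Z] [Module A Z]

lemma isDirectSummand_iff_nonempty_retract :
    IsDirectSummand A X Y ↔ Nonempty (Retract (ModuleCat.of A X) (ModuleCat.of A Y)) := by
  constructor
  · rintro ⟨i, p, hpi⟩
    exact ⟨⟨ModuleCat.ofHom i, ModuleCat.ofHom p, by rw [← ModuleCat.ofHom_comp, hpi]; rfl⟩⟩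
  · rintro ⟨r⟩
    exact ⟨r.i.hom, r.r.hom, by rw [← ModuleCat.hom_comp, r.retract]; rfl⟩

lemma extensionRetractClosure.of_isDirectSummand {P : ObjectProperty (ModuleCat.{0} A)}
    (h : IsDirectSummand A X Y) (hY : extensionRetractClosure P (ModuleCat.of A Y)) :
    extensionRetractClosure P (ModuleCat.of A X) :=
  of_retract (isDirectSummand_iff_nonempty_retract.mp h).some hY

lemma extensionRetractClosure.of_exact {P : ObjectProperty (ModuleCat.{0} A)} {f : X →ₗ[A] Y}
    {g : Y →ₗ[A] Z} (hf : Function.Injective f) (hg : Function.Surjective g)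
    (hfg : Function.Exact f g) (hX : extensionRetractClosure P (ModuleCat.of A X))
    (hZ : extensionRetractClosure P (ModuleCat.of A Z)) :
    extensionRetractClosure P (ModuleCat.of A Y) :=
  of_shortExact (S := ModuleCat.shortComplexOfCompEqZero f g hfg.linearMap_comp_eq_zero)
    (ModuleCat.shortComplex_shortExact _ hfg hf hg) hX hZ

lemma extensionRetractClosure.pi {P : ObjectProperty (ModuleCat.{0} A)} {ι : Type} [Finite ι]
    {F : ι → Type} [∀ i, AddCommGroup (F i)] [∀ i, Module A (F i)]
    (hF : ∀ i, extensionRetractClosure P (ModuleCat.of A (F i))) :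
    extensionRetractClosure P (ModuleCat.of A (∀ i, F i)) :=
  (extensionRetractClosure P).prop_of_isLimit_fan
    (ModuleCat.HasLimit.productLimitCone fun i => ModuleCat.of A (F i)).isLimit hF

lemma nonempty_retract_pi {ι : Type} (F : ι → Type) [∀ i, AddCommGroup (F i)]
    [∀ i, Module A (F i)] (i : ι) :
    Nonempty (Retract (ModuleCat.of A (F i)) (ModuleCat.of A (∀ i, F i))) := by
  classical
  exact isDirectSummand_iff_nonempty_retract.mp
    ⟨.single A F i, .proj i, LinearMap.proj_comp_single_same A F i⟩

lemma extVanish.subsingleton_ext_of_pi_right {ι : Type} {F : ι → Type} [∀ i, AddCommGroup (F i)]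
    [∀ i, Module A (F i)] {n : ℕ} (h : extVanish A X (∀ i, F i) (n + 1)) (i : ι) :
    Subsingleton (Abelian.Ext (ModuleCat.of A X) (ModuleCat.of A (F i)) (n + 1)) :=
  have := h.subsingleton_ext
  subsingleton_ext_of_retract (.refl _) (nonempty_retract_pi F i).some

lemma extVanish.subsingleton_ext_of_pi_left {ι : Type} {F : ι → Type} [∀ i, AddCommGroup (F i)]
    [∀ i, Module A (F i)] {n : ℕ} (h : extVanish A (∀ i, F i) X (n + 1)) (i : ι) :
    Subsingleton (Abelian.Ext (ModuleCat.of A (F i)) (ModuleCat.of A X) (n + 1)) :=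
  have := h.subsingleton_ext
  subsingleton_ext_of_retract (nonempty_retract_pi F i).some (.refl _)

variable (A) in
/-- The class of modules obtained from the family `F` by extensions and direct summands; it is a
version of the class `F(F̃)` of filtered modules that makes no reference to filtrations. -/
abbrev filtrationClosure {ι : Type} (F : ι → Type) [∀ i, AddCommGroup (F i)]
    [∀ i, Module A (F i)] : ObjectProperty (ModuleCat.{0} A) :=
  extensionRetractClosure (.ofObj fun i => ModuleCat.of A (F i))

variable {R : Type} [CommRing R] [Algebra R A] {Λ : Type}
  {Δ : Λ → Type} [∀ l, AddCommGroup (Δ l)] [∀ l, Module R (Δ l)] [∀ l, Module A (Δ l)]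
  [∀ l, IsScalarTower R A (Δ l)] {S : Set Λ} {M : Type} [AddCommGroup M] [Module A M]

variable (A R) in
/-- `TensorProduct.piScalarRight` for modules over a noncommutative algebra. -/
def tensorPiScalarRight (D : Type) [AddCommGroup D] [Module R D] [Module A D]
    [IsScalarTower R A D] (n : ℕ) : D ⊗[R] (Fin n → R) ≃ₗ[A] (Fin n → D) :=
  (TensorProduct.piScalarRight R R D (Fin n)).toAddEquiv.toLinearEquiv fun a x => by
    induction x with
    | zero => simp
    | tmul d v => ext j; simp [TensorProduct.smul_tmul', smul_comm (v j) a d]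
    | add x y hx hy => simp_all

open TensorProduct.AlgebraTensorModule in
lemma TensorFactor.inAdd (t : TensorFactor R A Λ Δ S X) : InAdd A (Δ t.lam) X := by
  have := t.fin
  have := t.proj
  obtain ⟨n, f, g, -, -, hfg⟩ := Module.Finite.exists_comp_eq_id_of_projective R t.U
  let e := tensorPiScalarRight A R (Δ t.lam) n
  have htensor : lTensor A (Δ t.lam) f ∘ₗ lTensor A (Δ t.lam) g = .id := by
    rw [← lTensor_comp, hfg, lTensor_id]
  refine ⟨n, e.toLinearMap ∘ₗ lTensor A (Δ t.lam) g ∘ₗ t.iso.toLinearMap,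
    t.iso.symm.toLinearMap ∘ₗ lTensor A (Δ t.lam) f ∘ₗ e.symm.toLinearMap,
    LinearMap.ext fun x => ?_⟩
  simpa using congr(t.iso.symm ($htensor (t.iso x)))

lemma InFilt.mem_filtrationClosure (hM : InFilt R A Λ Δ S M) :
    filtrationClosure A Δ (ModuleCat.of A M) := by
  obtain ⟨-, n, c, hbot, htop, hmono, hfac⟩ := hM
  have hc (k : Fin (n + 1)) : filtrationClosure A Δ (ModuleCat.of A (c k)) := by
    induction k using Fin.induction with
    | zero =>
      rw [hbot]
      exact .of_isZero (ModuleCat.isZero_of_subsingleton _)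
    | succ i ih =>
      obtain ⟨t⟩ := hfac i
      obtain ⟨m, ht⟩ := t.inAdd
      have hle : c i.castSucc ≤ c i.succ := hmono i.castSucc_le_succ
      refine .of_exact (Submodule.inclusion_injective hle) (Submodule.mkQ_surjective _) ?_ ih
        (.of_isDirectSummand ht (.pi fun _ => .of_prop (ObjectProperty.ofObj_apply _ _)))
      rw [LinearMap.exact_iff, Submodule.ker_mkQ, Submodule.range_inclusion]
  refine .of_isDirectSummand (Y := c (Fin.last n)) ?_ (hc _)
  rw [htop]
  exact ⟨_, _, Submodule.topEquiv.comp_symm⟩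

end ModuleCat

section QuasiHereditary

variable {R : Type} [CommRing R] {A : Type} [Ring A] [Algebra R A] {Λ : Type} [PartialOrder Λ]
  {Δ : Λ → Type} [∀ l, AddCommGroup (Δ l)] [∀ l, Module R (Δ l)] [∀ l, Module A (Δ l)]
  [∀ l, IsScalarTower R A (Δ l)]

lemma SplitQH.enoughExtProjectives (h : SplitQH R A Λ Δ) :
    EnoughExtProjectives.{0} (.ofObj fun l => ModuleCat.of A (Δ l)) (isProjective _) where
  isZero hZ := hZ.projective
  biprod _ _ := inferInstance
  subsingleton_ext (hJ : Projective _) _ :=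
    subsingleton_of_forall_eq 0 Abelian.Ext.eq_zero_of_projective
  exists_shortExact := by
    rintro _ ⟨l⟩
    exact ⟨_, _, _, _, _, (h.epi l).shortExact_shortComplexKer (h.epi_surj l),
      (h.ker_filt l).mem_filtrationClosure, (IsProjective.iff_projective _).mp (h.P_proj l)⟩

lemma SplitQH.self_mem_filtrationClosure [Finite Λ] (h : SplitQH R A Λ Δ) :
    filtrationClosure A Δ (ModuleCat.of A A) := by
  have hP (l : Λ) : filtrationClosure A Δ (ModuleCat.of A (h.P l)) :=
    .of_exact (h.epi l).ker.subtype_injective (h.epi_surj l) (h.epi l).exact_subtype_ker_map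
      (h.ker_filt l).mem_filtrationClosure (.of_prop (ObjectProperty.ofObj_apply _ _))
  obtain ⟨n, hn⟩ := h.add_gen (ModuleCat.of A A) (inferInstanceAs (Module.Finite A A))
    (inferInstanceAs (Module.Projective A A))
  exact .of_isDirectSummand hn (.pi fun _ => .pi hP)

end QuasiHereditary

section FiniteProjective

variable {R : Type*} [Ring R] {X Y Z : Type*} [AddCommGroup X] [Module R X] [AddCommGroup Y]
  [Module R Y] [AddCommGroup Z] [Module R Z]

variable (R X) in
/-- The module `X` is finitely generated and projective; these are the modules on which `R`-duality
is reflexive and turns short exact sequences into short exact sequences. -/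
structure IsFiniteProjective : Prop where
  finite : Module.Finite R X
  projective : Module.Projective R X

lemma IsFiniteProjective.of_retract (hY : IsFiniteProjective R Y) (i : X →ₗ[R] Y) (p : Y →ₗ[R] X)
    (hpi : p ∘ₗ i = .id) : IsFiniteProjective R X where
  finite := have := hY.finite; .of_surjective p fun x => ⟨i x, LinearMap.congr_fun hpi x⟩
  projective := have := hY.projective; .of_split i p hpi

lemma IsFiniteProjective.of_linearEquiv (hY : IsFiniteProjective R Y) (e : X ≃ₗ[R] Y) :
    IsFiniteProjective R X :=
  hY.of_retract e.toLinearMap e.symm.toLinearMap e.symm_comp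

lemma IsFiniteProjective.of_subsingleton [Subsingleton X] : IsFiniteProjective R X :=
  ⟨inferInstance, inferInstance⟩

variable {f : X →ₗ[R] Y} {g : Y →ₗ[R] Z}

lemma exists_section_of_surjective_of_projective [Module.Projective R Z]
    (hg : Function.Surjective g) : ∃ s : Z →ₗ[R] Y, g ∘ₗ s = .id :=
  g.exists_rightInverse_of_surjective (LinearMap.range_eq_top.mpr hg)

lemma exists_retraction_of_exact_of_projective [Module.Projective R Z]
    (hf : Function.Injective f) (hg : Function.Surjective g) (hfg : Function.Exact f g) :
    ∃ r : Y →ₗ[R] X, r ∘ₗ f = .id :=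
  ((hfg.split_tfae hf hg).out 0 1).mp (exists_section_of_surjective_of_projective hg)

lemma IsFiniteProjective.of_exact (hf : Function.Injective f) (hg : Function.Surjective g)
    (hfg : Function.Exact f g) (hX : IsFiniteProjective R X) (hZ : IsFiniteProjective R Z) :
    IsFiniteProjective R Y := by
  have := hX.finite
  have := hX.projective
  have := hZ.finite
  have := hZ.projective
  obtain ⟨e, -⟩ := ((hfg.split_tfae hf hg).out 0 2).mp
    (exists_section_of_surjective_of_projective hg)
  exact IsFiniteProjective.of_linearEquiv (Y := X × Z) ⟨inferInstance, inferInstance⟩ e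

/-- A version of `LinearMap.exact_lcomp_of_exact_of_surjective` over noncommutative rings. -/
lemma exact_lcomp_of_exact_of_surjective {S N : Type*} [Semiring S] [AddCommGroup N] [Module R N]
    [Module S N] [SMulCommClass R S N] (hfg : Function.Exact f g) (hg : Function.Surjective g) :
    Function.Exact (LinearMap.lcomp S N g) (LinearMap.lcomp S N f) := by
  intro φ
  constructor
  · intro hφ
    have hker : f.range ≤ φ.ker := LinearMap.range_le_ker_iff.mpr hφ
    refine ⟨f.range.liftQ φ hker ∘ₗ (hfg.linearEquivOfSurjective hg).symm.toLinearMap,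
      LinearMap.ext fun y => ?_⟩
    have hy : (hfg.linearEquivOfSurjective hg).symm (g y) = f.range.mkQ y := by
      rw [LinearEquiv.symm_apply_eq]
      rfl
    simp [hy]
  · rintro ⟨ψ, rfl⟩
    exact LinearMap.ext fun x => by simp [hfg.apply_apply_eq_zero]

end FiniteProjective

section Hom

variable {R : Type} [CommRing R] {A : Type} [Ring A] [Algebra R A]

lemma extensionRetractClosure.isFiniteProjective_hom {P : ObjectProperty (ModuleCat.{0} A)}
    {X : ModuleCat.{0} A} (hX : extensionRetractClosure P X) {N : Type} [AddCommGroup N]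
    [Module R N] [Module A N] [IsScalarTower R A N]
    (hext : ∀ D, P D → Subsingleton (Abelian.Ext D (ModuleCat.of A N) 1))
    (hhom : ∀ D : ModuleCat A, P D → IsFiniteProjective R (D →ₗ[A] N)) :
    IsFiniteProjective R (X →ₗ[A] N) := by
  induction hX with
  | of_prop hD => exact hhom _ hD
  | of_isZero hX =>
    have := ModuleCat.subsingleton_of_isZero hX
    exact .of_subsingleton
  | @of_shortExact S hS _ h₃ ih₁ ih₃ =>
    have := h₃.subsingleton_ext_left hext
    have hg := hS.moduleCat_surjective_g
    refine .of_exact (f := S.g.hom.lcomp R N) (g := S.f.hom.lcomp R N)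
      (LinearMap.lcomp_injective_of_surjective _ hg) (fun φ => ?_)
      (exact_lcomp_of_exact_of_surjective
        ((ShortComplex.ShortExact.moduleCat_exact_iff_function_exact _).mp hS.exact) hg) ih₃ ih₁
    obtain ⟨ψ, hψ⟩ := exists_f_comp_eq_of_subsingleton_ext hS (ModuleCat.ofHom φ)
    exact ⟨ψ.hom, ModuleCat.hom_ext_iff.mp hψ⟩
  | of_retract r _ ih =>
    refine ih.of_retract (r.r.hom.lcomp R N) (r.i.hom.lcomp R N) (LinearMap.ext fun φ => ?_)
    exact LinearMap.ext fun x => congrArg φ (congr($(r.retract) x))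

variable {Λ : Type} [PartialOrder Λ]
  {Δ : Λ → Type} [∀ l, AddCommGroup (Δ l)] [∀ l, Module R (Δ l)] [∀ l, Module A (Δ l)]
  [∀ l, IsScalarTower R A (Δ l)] {Nb : Λ → Type} [∀ l, AddCommGroup (Nb l)]
  [∀ l, Module R (Nb l)] [∀ l, Module A (Nb l)] [∀ l, IsScalarTower R A (Nb l)]

lemma IsCostandard.isFiniteProjective [Finite Λ] (hc : IsCostandard R A Λ Δ Nb)
    (h : SplitQH R A Λ Δ) (m : Λ) : IsFiniteProjective R (Nb m) := by
  obtain ⟨-, hdiag, hoff, hext⟩ := hc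
  refine IsFiniteProjective.of_linearEquiv ?_ (LinearMap.ringLmapEquivSelf A R (Nb m)).symm
  refine h.self_mem_filtrationClosure.isFiniteProjective_hom ?_ ?_
  · rintro _ ⟨l⟩
    exact (hext l m 1 one_pos).subsingleton_ext
  · rintro _ ⟨l⟩
    by_cases hlm : l = m
    · subst hlm
      obtain ⟨e⟩ := hdiag l
      exact .of_linearEquiv ⟨inferInstance, inferInstance⟩ e
    · have : Subsingleton (Δ l →ₗ[A] Nb m) := subsingleton_of_forall_eq 0 (hoff l m hlm)
      exact .of_subsingleton

end Hom

section Duality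

variable {R : Type} [CommRing R] {A : Type} [Ring A] [Algebra R A]
  {X Y Z : Type} [AddCommGroup X] [Module R X] [Module Aᵐᵒᵖ X] [IsScalarTower R Aᵐᵒᵖ X]
  [AddCommGroup Y] [Module R Y] [Module Aᵐᵒᵖ Y] [IsScalarTower R Aᵐᵒᵖ Y]
  [AddCommGroup Z] [Module R Z] [Module Aᵐᵒᵖ Z] [IsScalarTower R Aᵐᵒᵖ Z]

variable (R) in
/-- The map of left `A`-modules `DY → DX`, where `D = Hom_R(-, R)`, induced by a map `X → Y` of
right `A`-modules. -/
def dualMapOp (f : X →ₗ[Aᵐᵒᵖ] Y) : (Y →ₗ[R] R) →ₗ[A] (X →ₗ[R] R) where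
  toFun φ := φ ∘ₗ f.restrictScalars R
  map_add' _ _ := rfl
  map_smul' a φ := by
    ext x
    simp

variable {f : X →ₗ[Aᵐᵒᵖ] Y} {g : Y →ₗ[Aᵐᵒᵖ] Z}

lemma dualMapOp_comp_eq_id {s : Y →ₗ[Aᵐᵒᵖ] X} (hs : s ∘ₗ f = .id) :
    dualMapOp R f ∘ₗ dualMapOp R s = .id :=
  LinearMap.ext fun φ => LinearMap.ext fun x => congrArg φ (LinearMap.congr_fun hs x)

lemma dualMapOp_injective (hg : Function.Surjective g) : Function.Injective (dualMapOp R g) :=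
  LinearMap.lcomp_injective_of_surjective (S := R) (N := R) (g.restrictScalars R) hg

lemma dualMapOp_surjective [Module.Projective R Z] (hf : Function.Injective f)
    (hg : Function.Surjective g) (hfg : Function.Exact f g) :
    Function.Surjective (dualMapOp R f) := by
  obtain ⟨r, hr⟩ := exists_retraction_of_exact_of_projective (f := f.restrictScalars R)
    (g := g.restrictScalars R) hf hg hfg
  exact fun φ => ⟨φ ∘ₗ r, LinearMap.ext fun x => congrArg φ (LinearMap.congr_fun hr x)⟩

lemma dualMapOp_exact (hg : Function.Surjective g) (hfg : Function.Exact f g) :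
    Function.Exact (dualMapOp R g) (dualMapOp R f) :=
  exact_lcomp_of_exact_of_surjective (S := R) (N := R) (f := f.restrictScalars R)
    (g := g.restrictScalars R) hfg hg

variable (R A) in
/-- The evaluation map `N → DDN` as a map of left `A`-modules. -/
def dualEval (N : Type) [AddCommGroup N] [Module R N] [Module A N] [IsScalarTower R A N] :
    N →ₗ[A] ((N →ₗ[R] R) →ₗ[R] R) where
  toFun := Module.Dual.eval R N
  map_add' := map_add _
  map_smul' a x := LinearMap.ext fun φ => by simp

lemma IsFiniteProjective.dualEval_bijective {N : Type} [AddCommGroup N] [Module R N] [Module A N]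
    [IsScalarTower R A N] (hN : IsFiniteProjective R N) : Function.Bijective (dualEval R A N) :=
  have := hN.finite
  have := hN.projective
  Module.bijective_dual_eval R N

lemma IsFiniteProjective.isDirectSummand_dual_dual {N : Type} [AddCommGroup N] [Module R N]
    [Module A N] [IsScalarTower R A N] (hN : IsFiniteProjective R N) :
    IsDirectSummand A ((N →ₗ[R] R) →ₗ[R] R) N :=
  let e := LinearEquiv.ofBijective (dualEval R A N) hN.dualEval_bijective
  ⟨e.symm.toLinearMap, e.toLinearMap, e.comp_symm⟩

lemma module_eq_of_isScalarTower {S M : Type*} [Ring S] [Algebra R S] [AddCommGroup M]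
    [Module S M] (m₁ m₂ : Module R M) (_ : letI := m₁; IsScalarTower R S M)
    (_ : letI := m₂; IsScalarTower R S M) : m₁ = m₂ :=
  Module.ext' _ _ fun r x =>
    (letI := m₁; algebraMap_smul S r x).symm.trans (letI := m₂; algebraMap_smul S r x)

variable {ι : Type} {F : ι → Type} [∀ i, AddCommGroup (F i)] [modF : ∀ i, Module R (F i)]
  [∀ i, Module Aᵐᵒᵖ (F i)] [∀ i, IsScalarTower R Aᵐᵒᵖ (F i)]

lemma extensionRetractClosure.isFiniteProjective_and_dual {X : ModuleCat.{0} Aᵐᵒᵖ}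
    (hX : filtrationClosure Aᵐᵒᵖ F X)
    {P : ObjectProperty (ModuleCat.{0} A)} (hF : ∀ i, IsFiniteProjective R (F i))
    (hdual : ∀ i, extensionRetractClosure P (ModuleCat.of A (F i →ₗ[R] R)))
    [instX : Module R X] [towerX : IsScalarTower R Aᵐᵒᵖ X] :
    IsFiniteProjective R X ∧ extensionRetractClosure P (ModuleCat.of A (X →ₗ[R] R)) := by
  induction hX generalizing instX with
  | of_prop hD =>
    obtain ⟨i⟩ := hD
    obtain rfl := module_eq_of_isScalarTower (S := Aᵐᵒᵖ) (M := F i) instX (modF i) towerX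
      inferInstance
    exact ⟨hF i, hdual i⟩
  | of_isZero hX =>
    have := ModuleCat.subsingleton_of_isZero hX
    exact ⟨.of_subsingleton, .of_isZero (ModuleCat.isZero_of_subsingleton _)⟩
  | @of_shortExact S hS _ _ ih₁ ih₃ =>
    let := Module.restrictScalars R Aᵐᵒᵖ S.X₁
    let := Module.restrictScalars R Aᵐᵒᵖ S.X₃
    have := IsScalarTower.restrictScalars R Aᵐᵒᵖ S.X₁
    have := IsScalarTower.restrictScalars R Aᵐᵒᵖ S.X₃
    obtain ⟨h₁, hd₁⟩ := ih₁
    obtain ⟨h₃, hd₃⟩ := ih₃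
    have := h₃.projective
    have hf := hS.moduleCat_injective_f
    have hg := hS.moduleCat_surjective_g
    have hfg := (ShortComplex.ShortExact.moduleCat_exact_iff_function_exact _).mp hS.exact
    exact ⟨.of_exact (f := S.f.hom.restrictScalars R) (g := S.g.hom.restrictScalars R) hf hg hfg
      h₁ h₃, .of_exact (dualMapOp_injective hg) (dualMapOp_surjective hf hg hfg)
        (dualMapOp_exact hg hfg) hd₃ hd₁⟩
  | @of_retract X Y r _ ih =>
    let := Module.restrictScalars R Aᵐᵒᵖ Y
    have := IsScalarTower.restrictScalars R Aᵐᵒᵖ Y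
    obtain ⟨hY, hdY⟩ := ih
    have hri : r.r.hom ∘ₗ r.i.hom = .id := LinearMap.ext fun x => congr($(r.retract) x)
    exact ⟨hY.of_retract (r.i.hom.restrictScalars R) (r.r.hom.restrictScalars R)
      (LinearMap.ext fun x => LinearMap.congr_fun hri x),
      .of_isDirectSummand ⟨dualMapOp R r.r.hom, dualMapOp R r.i.hom, dualMapOp_comp_eq_id hri⟩ hdY⟩

end Duality

section InAdd

variable {A : Type} [Ring A] {T X Y : Type} [AddCommGroup T] [Module A T] [AddCommGroup X]
  [Module A X] [AddCommGroup Y] [Module A Y]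

lemma InAdd.of_isDirectSummand (hY : InAdd A T Y) (h : IsDirectSummand A X Y) : InAdd A T X := by
  obtain ⟨n, j, q, hqj⟩ := hY
  obtain ⟨i, p, hpi⟩ := h
  exact ⟨n, j ∘ₗ i, p ∘ₗ q, by
    rw [LinearMap.comp_assoc, ← LinearMap.comp_assoc i, hqj, LinearMap.id_comp, hpi]⟩

lemma InAdd.of_linearEquiv (hY : InAdd A T Y) (e : X ≃ₗ[A] Y) : InAdd A T X :=
  hY.of_isDirectSummand ⟨e.toLinearMap, e.symm.toLinearMap, e.symm_comp⟩

lemma InAdd.of_subsingleton [Subsingleton X] : InAdd A T X :=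
  ⟨0, 0, 0, LinearMap.ext fun _ => Subsingleton.elim _ _⟩

lemma InAdd.prod (hX : InAdd A T X) (hY : InAdd A T Y) : InAdd A T (X × Y) := by
  obtain ⟨m, i, p, hpi⟩ := hX
  obtain ⟨n, j, q, hqj⟩ := hY
  let e : ((Fin m → T) × (Fin n → T)) ≃ₗ[A] (Fin (m + n) → T) :=
    (LinearEquiv.sumArrowLequivProdArrow (Fin m) (Fin n) A T).symm ≪≫ₗ
      LinearEquiv.funCongrLeft A T finSumFinEquiv.symm
  have hpow : InAdd A T ((Fin m → T) × (Fin n → T)) :=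
    ⟨m + n, e.toLinearMap, e.symm.toLinearMap, e.symm_comp⟩
  exact hpow.of_isDirectSummand ⟨i.prodMap j, p.prodMap q, by
    rw [LinearMap.prodMap_comp, hpi, hqj, LinearMap.prodMap_id]⟩

lemma InAdd.biprod {X Y : ModuleCat.{0} A} (hX : InAdd A T X) (hY : InAdd A T Y) :
    InAdd A T (X ⊞ Y : ModuleCat.{0} A) :=
  (hX.prod hY).of_linearEquiv (ModuleCat.biprodIsoProd X Y).toLinearEquiv

lemma InAdd.extensionRetractClosure {P : ObjectProperty (ModuleCat.{0} A)}
    (hX : InAdd A T X) (hT : P (ModuleCat.of A T)) :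
    extensionRetractClosure P (ModuleCat.of A X) := by
  obtain ⟨n, hn⟩ := hX
  exact .of_isDirectSummand hn (.pi fun _ => .of_prop hT)

end InAdd

section RelativeInjective

variable {R : Type} [CommRing R] {A : Type} [Ring A] [Algebra R A]

/-- The map `X → DA` corresponding to `χ` under the adjunction `Hom_R(X, R) ≅ Hom_A(X, DA)`. -/
def dualCoextend {X : Type} [AddCommGroup X] [Module R X] [Module A X] [IsScalarTower R A X]
    (χ : X →ₗ[R] R) : X →ₗ[A] (A →ₗ[R] R) where
  toFun x := χ ∘ₗ (LinearMap.toSpanSingleton A X x).restrictScalars R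
  map_add' x y := by
    ext a
    simp
  map_smul' b x := by
    ext a
    simp [mul_smul]

lemma exists_extension_dual_of_retraction {X Y : Type} [AddCommGroup X] [Module R X] [Module A X]
    [IsScalarTower R A X] [AddCommGroup Y] [Module R Y] [Module A Y] [IsScalarTower R A Y]
    {i : X →ₗ[A] Y} {r : Y →ₗ[R] X} (hr : r ∘ₗ i.restrictScalars R = .id)
    (φ : X →ₗ[A] (A →ₗ[R] R)) : ∃ ψ : Y →ₗ[A] (A →ₗ[R] R), ψ ∘ₗ i = φ := by
  refine ⟨dualCoextend (LinearMap.applyₗ (1 : A) ∘ₗ φ.restrictScalars R ∘ₗ r),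
    LinearMap.ext fun x => LinearMap.ext fun a => ?_⟩
  have hri : r (a • i x) = a • x := by
    simpa using LinearMap.congr_fun hr (a • x)
  simp [dualCoextend, hri]

lemma subsingleton_ext_one_dual (X : Type) [AddCommGroup X] [Module R X] [Module A X]
    [IsScalarTower R A X] [Module.Projective R X] :
    Subsingleton (Abelian.Ext (ModuleCat.of A X) (ModuleCat.of A (A →ₗ[R] R)) 1) := by
  let π := Finsupp.linearCombination A (id : X → X)
  have hπ : Function.Surjective π := Finsupp.linearCombination_id_surjective A X
  have hS := π.shortExact_shortComplexKer hπ
  have : Projective π.shortComplexKer.X₂ :=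
    (IsProjective.iff_projective _).mp (inferInstanceAs (Module.Projective A (X →₀ A)))
  obtain ⟨r, hr⟩ := exists_retraction_of_exact_of_projective (X := π.ker) (Y := X →₀ A)
    (f := π.ker.subtype.restrictScalars R) (g := π.restrictScalars R)
    π.ker.subtype_injective hπ (LinearMap.exact_subtype_ker_map π)
  refine subsingleton_ext_one_of_forall_exists_f_comp_eq hS fun φ => ?_
  obtain ⟨ψ, hψ⟩ := exists_extension_dual_of_retraction hr φ.hom
  exact ⟨ModuleCat.ofHom ψ, ModuleCat.hom_ext hψ⟩

lemma dual_pi_inAdd (n : ℕ) : InAdd A (A →ₗ[R] R) ((Fin n → Aᵐᵒᵖ) →ₗ[R] R) := by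
  let e : ((Fin n → Aᵐᵒᵖ) →ₗ[R] R) ≃ₗ[R] (Fin n → A →ₗ[R] R) :=
    (LinearMap.lsum R (fun _ => Aᵐᵒᵖ) R).symm ≪≫ₗ
      LinearEquiv.piCongrRight fun _ => (MulOpposite.opLinearEquiv R).symm.arrowCongr (.refl R R)
  let eA : ((Fin n → Aᵐᵒᵖ) →ₗ[R] R) ≃ₗ[A] (Fin n → A →ₗ[R] R) :=
    { e.toAddEquiv with
      map_smul' := fun a φ => by
        ext j b
        simp [e, ← Pi.single_smul] }
  exact ⟨n, eA.toLinearMap, eA.symm.toLinearMap, eA.symm_comp⟩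

lemma dual_inAdd_of_projective (P : Type) [AddCommGroup P] [Module R P] [Module Aᵐᵒᵖ P]
    [IsScalarTower R Aᵐᵒᵖ P] [Module.Finite Aᵐᵒᵖ P] [Module.Projective Aᵐᵒᵖ P] :
    InAdd A (A →ₗ[R] R) (P →ₗ[R] R) := by
  obtain ⟨n, p, s, -, -, hps⟩ := Module.Finite.exists_comp_eq_id_of_projective Aᵐᵒᵖ P
  exact (dual_pi_inAdd n).of_isDirectSummand
    ⟨dualMapOp R p, dualMapOp R s, dualMapOp_comp_eq_id hps⟩

variable {Λ : Type} [PartialOrder Λ]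
  {Δ : Λ → Type} [∀ l, AddCommGroup (Δ l)] [∀ l, Module R (Δ l)] [∀ l, Module A (Δ l)]
  [∀ l, IsScalarTower R A (Δ l)] {Nb : Λ → Type} [∀ l, AddCommGroup (Nb l)]
  [∀ l, Module R (Nb l)] [∀ l, Module A (Nb l)] [∀ l, IsScalarTower R A (Nb l)]

lemma SplitQH.exists_shortExact_dual (h : SplitQH R Aᵐᵒᵖ Λ fun l => Nb l →ₗ[R] R)
    (hNb : ∀ l, IsFiniteProjective R (Nb l)) (l : Λ) :
    ∃ (J K : ModuleCat.{0} A) (i : ModuleCat.of A (Nb l) ⟶ J) (p : J ⟶ K) (w : i ≫ p = 0),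
      (ShortComplex.mk i p w).ShortExact ∧ InAdd A (A →ₗ[R] R) J ∧ filtrationClosure A Nb K := by
  let := Module.restrictScalars R Aᵐᵒᵖ (h.P l)
  have := IsScalarTower.restrictScalars R Aᵐᵒᵖ (h.P l)
  have := h.P_fin l
  have := h.P_proj l
  have := h.deltaProjR l
  have heval := (hNb l).dualEval_bijective (A := A)
  have hπ := h.epi_surj l
  have hker := (h.epi l).exact_subtype_ker_map
  have hK : filtrationClosure A Nb (ModuleCat.of A ((h.epi l).ker →ₗ[R] R)) :=
    ((h.ker_filt l).mem_filtrationClosure.isFiniteProjective_and_dual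
        (fun m => ⟨h.deltaFinR m, h.deltaProjR m⟩)
      fun m => .of_isDirectSummand (hNb m).isDirectSummand_dual_dual
        (.of_prop (ObjectProperty.ofObj_apply _ _))).2
  let i := dualMapOp R (h.epi l) ∘ₗ dualEval R A (Nb l)
  let p := dualMapOp R (h.epi l).ker.subtype
  have hi : Function.Injective i := (dualMapOp_injective hπ).comp heval.injective
  have hp : Function.Surjective p :=
    dualMapOp_surjective (h.epi l).ker.subtype_injective hπ hker
  have hip : Function.Exact i p :=
    (heval.surjective.comp_exact_iff_exact (p := dualEval R A (Nb l))).mpr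
      (dualMapOp_exact hπ hker)
  let S := ModuleCat.shortComplexOfCompEqZero i p hip.linearMap_comp_eq_zero
  have hS : S.ShortExact := ModuleCat.shortComplex_shortExact _ hip hi hp
  exact ⟨S.X₂, S.X₃, S.f, S.g, S.zero, hS, dual_inAdd_of_projective (h.P l), hK⟩

lemma IsCostandard.enoughExtInjectives [Finite Λ] (hc : IsCostandard R A Λ Δ Nb)
    (h : SplitQH R A Λ Δ) :
    EnoughExtInjectives.{0} (.ofObj fun l => ModuleCat.of A (Nb l))
      fun J => InAdd A (A →ₗ[R] R) J where
  isZero hZ := have := ModuleCat.subsingleton_of_isZero hZ; .of_subsingleton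
  biprod := .biprod
  subsingleton_ext := by
    rintro J _ ⟨l⟩ hJ
    have := (hc.isFiniteProjective h l).projective
    refine (hJ.extensionRetractClosure
      ((ObjectProperty.singleton_iff _ _).mpr rfl)).subsingleton_ext_right ?_
    rintro _ ⟨⟩
    exact subsingleton_ext_one_dual (Nb l)
  exists_shortExact := by
    rintro _ ⟨l⟩
    exact hc.1.some.exists_shortExact_dual (hc.isFiniteProjective h) l

end RelativeInjective

theorem ext_projective_and_injective_in_filtrations_general
    {R : Type} [CommRing R] {A : Type} [Ring A] [Algebra R A]
    {Λ : Type} [Finite Λ] [PartialOrder Λ]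
    {Δ : Λ → Type} [∀ l, AddCommGroup (Δ l)] [∀ l, Module R (Δ l)]
    [∀ l, Module A (Δ l)] [∀ l, IsScalarTower R A (Δ l)]
    {Nb : Λ → Type} [∀ l, AddCommGroup (Nb l)] [∀ l, Module R (Nb l)]
    [∀ l, Module A (Nb l)] [∀ l, IsScalarTower R A (Nb l)]
    (h : SplitQH R A Λ Δ) (hc : IsCostandard R A Λ Δ Nb) :
    (∀ (M : Type) [AddCommGroup M] [Module A M], filtrationClosure A Δ (ModuleCat.of A M) →
      extVanish A M (∀ l, Δ l) 1 → Module.Projective A M) ∧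
    (∀ (N : Type) [AddCommGroup N] [Module A N], filtrationClosure A Nb (ModuleCat.of A N) →
      extVanish A (∀ l, Nb l) N 1 → InAdd A (A →ₗ[R] R) N) := by
  refine ⟨fun M _ _ hM hext => ?_, fun N _ _ hN hext => ?_⟩
  · obtain ⟨J, hJ, ⟨r⟩⟩ := h.enoughExtProjectives.exists_retract hM (by
      rintro _ ⟨l⟩
      exact hext.subsingleton_ext_of_pi_right l)
    have : Projective J := hJ
    exact (IsProjective.iff_projective M).mpr r.projective
  · obtain ⟨J, hJ, hr⟩ := (hc.enoughExtInjectives h).exists_retract hN (by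
      rintro _ ⟨l⟩
      exact hext.subsingleton_ext_of_pi_left l)
    exact hJ.of_isDirectSummand (isDirectSummand_iff_nonempty_retract.mpr hr)

/-- If `M ∈ F(Δ̃)` and `Ext^1_A(M, ⊕_λ Δ(λ)) = 0`, then `M` is a projective
`A`-module. Dually, if `N ∈ F(∇̃)` and `Ext^1_A(⊕_λ ∇(λ), N) = 0`, then `N` is
`(A,R)`-injective, i.e. `N ∈ add (D A)`. -/
theorem ext_projective_and_injective_in_filtrations
    (R : Type) [CommRing R] [IsNoetherianRing R]
    (A : Type) [Ring A] [Algebra R A]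
    (Λ : Type) [Fintype Λ] [PartialOrder Λ]
    (Δ : Λ → Type) [∀ l, AddCommGroup (Δ l)] [∀ l, Module R (Δ l)]
    [∀ l, Module A (Δ l)] [∀ l, IsScalarTower R A (Δ l)]
    (Nb : Λ → Type) [∀ l, AddCommGroup (Nb l)] [∀ l, Module R (Nb l)]
    [∀ l, Module A (Nb l)] [∀ l, IsScalarTower R A (Nb l)]
    (h : SplitQH R A Λ Δ) (hc : IsCostandard R A Λ Δ Nb) :
    (∀ (M : Type) [AddCommGroup M] [Module A M], InFilt R A Λ Δ Set.univ M →
      extVanish A M (∀ l, Δ l) 1 → Module.Projective A M) ∧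
    (∀ (N : Type) [AddCommGroup N] [Module A N], InFilt R A Λ Nb Set.univ N →
      extVanish A (∀ l, Nb l) N 1 → InAdd A (A →ₗ[R] R) N) := by
  exact (ext_projective_and_injective_in_filtrations_general h hc).imp
    (fun H M _ _ hM => H M hM.mem_filtrationClosure)
    (fun H N _ _ hN => H N hN.mem_filtrationClosure)

end
end

section
/- Let (A, {Δ(λ)}) be a split quasi-hereditary algebra over a commutative Noetherian ring R. For each M ∈ F(Δ̃) there exists a partial tilting module T_M (i.e., T_M ∈ F(Δ̃) ∩ F(∇̃)) and a monomorphism i_M : M → T_M whose cokernel lies in F(Δ), the category of modules filtered by standard modules. -/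
open scoped TensorProduct
open CategoryTheory

/-!
Going down through `Λ` along a linear extension of its order, one repeatedly replaces `M` by a
universal extension by copies of the standard module `Δ l`. As `Ext¹(Δ m, Δ l) = 0` unless `m < l`,
this preserves the vanishing of `Ext¹` already achieved at the weights visited before. The result is
an embedding of `M` into a module `T` with `Ext¹(Δ m, T) = 0` for all `m` and a cokernel filtered by
standard modules. All `Hom(Δ m, T)` are then projective over `R`.

For a maximal `l` with `Hom(Δ l, T) ≠ 0`, the kernel and cokernel of the evaluation map
`Δ l ⊗ Hom(Δ l, T) → T` receive no nonzero map from the projective module `P l` over `Δ l`, nor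
does the cokernel from any `P m` with `l < m`. Hence the tensor product of a generator of
`Hom(Δ l, ∇ l)` with `Hom(Δ l, T)` extends along the evaluation map to a map
`T → ∇ l ⊗ Hom(Δ l, T)`. This map is surjective, and its kernel satisfies the same hypotheses with
one weight fewer, so `T` is also filtered by costandard modules.
-/

universe u v w

/-! ### Short exact sequences -/

section ShortExact

variable {A : Type u} [Ring A] {X' X X'' Y Z : Type v}
  [AddCommGroup X'] [Module A X'] [AddCommGroup X] [Module A X]
  [AddCommGroup X''] [Module A X''] [AddCommGroup Y] [Module A Y] [AddCommGroup Z] [Module A Z]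

/-- The sequence `0 → X' → X → X'' → 0` with maps `f` and `g` is exact. Working with unbundled
linear maps avoids the passage to `ModuleCat` and its short complexes. -/
structure IsSES (f : X' →ₗ[A] X) (g : X →ₗ[A] X'') : Prop where
  injective : Function.Injective f
  surjective : Function.Surjective g
  exact : Function.Exact f g

namespace IsSES

variable {f : X' →ₗ[A] X} {g : X →ₗ[A] X''}

lemma ker_subtype (g : X →ₗ[A] X'') (hg : Function.Surjective g) :
    IsSES (LinearMap.ker g).subtype g :=
  ⟨Subtype.val_injective, hg, g.exact_subtype_ker_map⟩

lemma subtype_mkQ (S : Submodule A X) : IsSES S.subtype S.mkQ :=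
  ⟨Subtype.val_injective, S.mkQ_surjective, LinearMap.exact_subtype_mkQ S⟩

lemma range_mkQ (f : X' →ₗ[A] X) (hf : Function.Injective f) :
    IsSES f (LinearMap.range f).mkQ :=
  ⟨hf, Submodule.mkQ_surjective _, f.exact_map_mkQ_range⟩

lemma inl_snd : IsSES (LinearMap.inl A X Y) (LinearMap.snd A X Y) :=
  ⟨LinearMap.inl_injective, LinearMap.snd_surjective, .inl_snd⟩

lemma comp_eq_zero (h : IsSES f g) : g ∘ₗ f = 0 :=
  h.exact.linearMap_comp_eq_zero

lemma apply_apply (h : IsSES f g) (x : X') : g (f x) = 0 :=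
  h.exact.apply_apply_eq_zero x

lemma exists_lift (h : IsSES f g) (u : Y →ₗ[A] X) (hu : g ∘ₗ u = 0) :
    ∃ v : Y →ₗ[A] X', f ∘ₗ v = u := by
  have hmem (y : Y) : u y ∈ LinearMap.range f := (h.exact _).1 (LinearMap.congr_fun hu y)
  let e := LinearEquiv.ofInjective f h.injective
  exact ⟨e.symm ∘ₗ u.codRestrict _ hmem, LinearMap.ext fun y =>
    congrArg Subtype.val (e.apply_symm_apply ⟨u y, hmem y⟩)⟩

lemma exists_desc (h : IsSES f g) (u : X →ₗ[A] Y) (hu : u ∘ₗ f = 0) :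
    ∃ v : X'' →ₗ[A] Y, v ∘ₗ g = u := by
  have hle : LinearMap.range f ≤ LinearMap.ker u := LinearMap.range_le_ker_iff.2 hu
  refine ⟨(LinearMap.range f).liftQ u hle ∘ₗ
    (h.exact.linearEquivOfSurjective h.surjective).symm.toLinearMap, LinearMap.ext fun x => ?_⟩
  have hx : (h.exact.linearEquivOfSurjective h.surjective).symm (g x)
      = (LinearMap.range f).mkQ x :=
    (LinearEquiv.symm_apply_eq _).2 rfl
  simp [hx]

lemma exists_section_iff_exists_retraction (h : IsSES f g) :
    (∃ s, g ∘ₗ s = LinearMap.id) ↔ ∃ r, r ∘ₗ f = LinearMap.id :=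
  (h.exact.split_tfae h.injective h.surjective).out 0 1

lemma nonempty_equiv_prod (h : IsSES f g) (hs : ∃ s, g ∘ₗ s = LinearMap.id) :
    Nonempty (X ≃ₗ[A] X' × X'') :=
  (((h.exact.split_tfae h.injective h.surjective).out 0 2 :).1 hs).nonempty

lemma exists_pushout (h : IsSES f g) (t : X' →ₗ[A] Y) :
    ∃ (E : Type v) (_ : AddCommGroup E) (_ : Module A E) (i : Y →ₗ[A] E) (q : E →ₗ[A] X'')
      (t' : X →ₗ[A] E), IsSES i q ∧ t' ∘ₗ f = i ∘ₗ t := by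
  let S := LinearMap.range (f.prod (-t))
  have hS : S ≤ LinearMap.ker (g ∘ₗ LinearMap.fst A X Y) := by
    rintro _ ⟨x, rfl⟩
    exact h.apply_apply x
  refine ⟨(X × Y) ⧸ S, inferInstance, inferInstance, S.mkQ ∘ₗ LinearMap.inr A X Y,
    S.liftQ _ hS, S.mkQ ∘ₗ LinearMap.inl A X Y, ⟨?_, ?_, ?_⟩, ?_⟩
  · refine (injective_iff_map_eq_zero _).2 fun y hy => ?_
    obtain ⟨x, hx⟩ := (Submodule.Quotient.mk_eq_zero S).1 hy
    obtain ⟨hx₁, hx₂⟩ := Prod.ext_iff.1 hx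
    have hx₀ : x = 0 := h.injective (hx₁.trans (map_zero f).symm)
    simpa [hx₀] using hx₂.symm
  · exact fun z => (h.surjective z).imp' (fun x => S.mkQ (x, 0)) fun _ hx => hx
  · intro e
    obtain ⟨⟨x, y⟩, rfl⟩ := S.mkQ_surjective e
    constructor
    · intro hx
      obtain ⟨x', rfl⟩ := (h.exact x).1 hx
      exact ⟨y + t x', (Submodule.Quotient.eq S).2 ⟨-x', by simp⟩⟩
    · rintro ⟨y', hy'⟩
      rw [← hy']
      exact map_zero g
  · exact LinearMap.ext fun x => (Submodule.Quotient.eq S).2 ⟨x, by simp⟩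

lemma exists_pullback (h : IsSES f g) (s : Y →ₗ[A] X'') :
    ∃ (E : Type v) (_ : AddCommGroup E) (_ : Module A E) (i : X' →ₗ[A] E) (q : E →ₗ[A] Y)
      (s' : E →ₗ[A] X), IsSES i q ∧ g ∘ₗ s' = s ∘ₗ q := by
  let E := LinearMap.eqLocus (g ∘ₗ LinearMap.fst A X Y) (s ∘ₗ LinearMap.snd A X Y)
  let i : X' →ₗ[A] E := (f.prod 0).codRestrict E fun x => by
    simpa [E] using h.apply_apply x
  refine ⟨E, inferInstance, inferInstance, i, LinearMap.snd A X Y ∘ₗ E.subtype,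
    LinearMap.fst A X Y ∘ₗ E.subtype, ⟨?_, ?_, ?_⟩, LinearMap.ext fun e => e.2⟩
  · exact fun x y hxy => h.injective (congrArg Prod.fst (Subtype.ext_iff.1 hxy))
  · intro y
    obtain ⟨x, hx⟩ := h.surjective (s y)
    exact ⟨⟨(x, y), hx⟩, rfl⟩
  · rintro ⟨⟨x, y⟩, hxy⟩
    constructor
    · rintro rfl
      obtain ⟨x', rfl⟩ := (h.exact x).1 (hxy.trans (map_zero s))
      exact ⟨x', rfl⟩
    · rintro ⟨x', hx'⟩
      exact (congrArg Prod.snd (Subtype.ext_iff.1 hx')).symm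

lemma exists_coker_comp {U V : Type v} [AddCommGroup U] [Module A U] [AddCommGroup V] [Module A V]
    {f : X →ₗ[A] Y} {a : Y →ₗ[A] U} {g : Y →ₗ[A] Z} {b : Z →ₗ[A] V}
    (hf : IsSES f a) (hg : IsSES g b) :
    ∃ (W : Type v) (_ : AddCommGroup W) (_ : Module A W) (c : Z →ₗ[A] W) (i : U →ₗ[A] W)
      (q : W →ₗ[A] V), IsSES (g ∘ₗ f) c ∧ IsSES i q ∧ q ∘ₗ c = b := by
  have hgf := range_mkQ (g ∘ₗ f) (hg.injective.comp hf.injective)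
  set c := (LinearMap.range (g ∘ₗ f)).mkQ
  obtain ⟨i, hi⟩ := hf.exists_desc (c ∘ₗ g) (by rw [LinearMap.comp_assoc, hgf.comp_eq_zero])
  obtain ⟨q, hq⟩ := hgf.exists_desc b (by
    rw [← LinearMap.comp_assoc, hg.comp_eq_zero, LinearMap.zero_comp])
  have hi' : ∀ y, i (a y) = c (g y) := LinearMap.congr_fun hi
  have hq' : ∀ z, q (c z) = b z := LinearMap.congr_fun hq
  refine ⟨_, _, _, c, i, q, hgf, ⟨(injective_iff_map_eq_zero i).2 fun u hu => ?_, fun v => ?_,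
    fun w => ⟨fun hw => ?_, ?_⟩⟩, hq⟩
  · obtain ⟨y, rfl⟩ := hf.surjective u
    obtain ⟨x, hx⟩ := (hgf.exact _).1 ((hi' y).symm.trans hu)
    exact (hf.exact y).2 ⟨x, hg.injective hx⟩
  · obtain ⟨z, rfl⟩ := hg.surjective v
    exact ⟨c z, hq' z⟩
  · obtain ⟨z, rfl⟩ := hgf.surjective w
    obtain ⟨y, rfl⟩ := (hg.exact z).1 ((hq' z).symm.trans hw)
    exact ⟨a y, hi' y⟩
  · rintro ⟨u, rfl⟩
    obtain ⟨y, rfl⟩ := hf.surjective u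
    rw [hi', hq', hg.apply_apply]

lemma exists_ker_comp {U : Type v} [AddCommGroup U] [Module A U]
    {f : X' →ₗ[A] X} {g : X →ₗ[A] X''} {a : Y →ₗ[A] X''} {b : X'' →ₗ[A] U}
    (h : IsSES f g) (hab : IsSES a b) :
    ∃ (K : Type v) (_ : AddCommGroup K) (_ : Module A K) (k : K →ₗ[A] X) (i : X' →ₗ[A] K)
      (q : K →ₗ[A] Y), IsSES k (b ∘ₗ g) ∧ IsSES i q ∧ k ∘ₗ i = f := by
  have hk := ker_subtype (b ∘ₗ g) (hab.surjective.comp h.surjective)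
  set k := (LinearMap.ker (b ∘ₗ g)).subtype
  obtain ⟨i, hi⟩ := hk.exists_lift f (by rw [LinearMap.comp_assoc, h.comp_eq_zero,
    LinearMap.comp_zero])
  obtain ⟨q, hq⟩ := hab.exists_lift (g ∘ₗ k) hk.comp_eq_zero
  have hi' : ∀ x, k (i x) = f x := LinearMap.congr_fun hi
  have hq' : ∀ z, a (q z) = g (k z) := LinearMap.congr_fun hq
  refine ⟨_, _, _, k, i, q, hk, ⟨fun x y hxy => ?_, fun y => ?_, fun z => ⟨fun hz => ?_, ?_⟩⟩, hi⟩
  · exact h.injective (by rw [← hi', hxy, hi'])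
  · obtain ⟨x, hx⟩ := h.surjective (a y)
    obtain ⟨z, rfl⟩ := (hk.exact x).1 ((congrArg b hx).trans (hab.apply_apply y))
    exact ⟨z, hab.injective ((hq' z).trans hx)⟩
  · obtain ⟨x, hx⟩ := (h.exact (k z)).1 (by rw [← hq', hz, map_zero])
    exact ⟨x, hk.injective ((hi' x).trans hx)⟩
  · rintro ⟨x, rfl⟩
    exact hab.injective (by rw [hq', hi', h.apply_apply, map_zero])

end IsSES

end ShortExact

/-! ### Classes of modules closed under extensions -/

section ModuleClass

variable {A : Type u} [Ring A]

/-- A property of `A`-modules, stated on unbundled modules. -/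
abbrev ModuleClass (A : Type u) [Ring A] : Type (max u (v + 1)) :=
  ∀ (X : Type v) [AddCommGroup X] [Module A X], Prop

namespace ModuleClass

/-- The class contains the zero modules and is closed under extensions. -/
structure IsExtClosed (p : ModuleClass.{u, v} A) : Prop where
  zero : ∀ (X : Type v) [AddCommGroup X] [Module A X] [Subsingleton X], p X
  ext : ∀ {X' X X'' : Type v} [AddCommGroup X'] [Module A X'] [AddCommGroup X] [Module A X]
    [AddCommGroup X''] [Module A X''] {f : X' →ₗ[A] X} {g : X →ₗ[A] X''},
    IsSES f g → p X' → p X'' → p X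

/-- The class contains the zero modules and is closed under extensions and direct summands.
This is all that the induction over a quasi-hereditary structure needs. -/
structure IsExtSummandClosed (p : ModuleClass.{u, v} A) : Prop extends IsExtClosed p where
  retract : ∀ {X Y : Type v} [AddCommGroup X] [Module A X] [AddCommGroup Y] [Module A Y]
    {j : X →ₗ[A] Y} {r : Y →ₗ[A] X}, r ∘ₗ j = LinearMap.id → p Y → p X

namespace IsExtClosed

variable {p : ModuleClass.{u, v} A} {X Y : Type v} [AddCommGroup X] [Module A X]
  [AddCommGroup Y] [Module A Y]

lemma of_equiv (hp : IsExtClosed p) (e : X ≃ₗ[A] Y) (hX : p X) : p Y :=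
  hp.ext (f := e.toLinearMap) (g := (0 : Y →ₗ[A] PUnit.{v + 1}))
    ⟨e.injective, Function.surjective_to_subsingleton _, fun y => iff_of_true rfl (e.surjective y)⟩
    hX (hp.zero _)

lemma prod (hp : IsExtClosed p) (hX : p X) (hY : p Y) : p (X × Y) :=
  hp.ext .inl_snd hX hY

lemma pi (hp : IsExtClosed p) {ι : Type} [Finite ι] (M : ι → Type v) [∀ i, AddCommGroup (M i)]
    [∀ i, Module A (M i)] (hM : ∀ i, p (M i)) : p (∀ i, M i) := by
  induction ι using Finite.induction_empty_option with
  | of_equiv e ih => exact hp.of_equiv (LinearEquiv.piCongrLeft A M e) (ih _ fun i => hM (e i))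
  | h_empty => exact hp.zero _
  | h_option ih =>
    exact hp.of_equiv (LinearEquiv.piOptionEquivProd A).symm
      (hp.prod (hM none) (ih _ fun i => hM i))

end IsExtClosed

end ModuleClass

end ModuleClass

/-! ### Filtrations -/

section Filtered

variable {A : Type u} [Ring A]

open ModuleClass

/-- `Filtered q M` says that `M` is obtained from zero by finitely many extensions with cokernel
satisfying `q`; for classes `q` invariant under isomorphism this means that `M` has a finite
filtration by submodules with factors in `q`, see `filtered_iff_exists_chain`. -/
inductive Filtered (q : ModuleClass.{u, v} A) : ModuleClass.{u, v} A
  | zero (X : Type v) [AddCommGroup X] [Module A X] [Subsingleton X] : Filtered q X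
  | step {X' X X'' : Type v} [AddCommGroup X'] [Module A X'] [AddCommGroup X] [Module A X]
    [AddCommGroup X''] [Module A X''] {f : X' →ₗ[A] X} {g : X →ₗ[A] X''} (h : IsSES f g)
    (h' : Filtered q X') (h'' : q X'') : Filtered q X

variable {q : ModuleClass.{u, v} A}

namespace Filtered

lemma of_equiv {X Y : Type v} [AddCommGroup X] [Module A X] [AddCommGroup Y] [Module A Y]
    (e : X ≃ₗ[A] Y) (hX : Filtered q X) : Filtered q Y := by
  cases hX with
  | zero =>
    have := e.symm.injective.subsingleton
    exact .zero _
  | @step _ _ _ _ _ _ _ _ _ f g h h' h'' =>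
    exact .step (f := e.toLinearMap ∘ₗ f) (g := g ∘ₗ e.symm.toLinearMap)
      ⟨e.injective.comp h.injective, h.surjective.comp e.symm.surjective, fun y =>
        (h.exact (e.symm y)).trans (exists_congr fun _ => LinearEquiv.eq_symm_apply e)⟩ h' h''

lemma isExtClosed : IsExtClosed (Filtered q) where
  zero := .zero
  ext := by
    intro X' X X'' _ _ _ _ _ _ f g h h' h''
    induction h'' generalizing X with
    | zero =>
      exact h'.of_equiv (.ofBijective f ⟨h.injective, fun x =>
        (h.exact x).1 (Subsingleton.elim _ _)⟩)
    | step hab _ hq ih =>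
      obtain ⟨K, _, _, k, i, r, hk, hir, -⟩ := h.exists_ker_comp hab
      exact .step hk (ih hir) hq

lemma of_mem {X : Type v} [AddCommGroup X] [Module A X] (h : q X) : Filtered q X :=
  .step (f := (0 : PUnit.{v + 1} →ₗ[A] X)) (g := LinearMap.id)
    ⟨Function.injective_of_subsingleton _, Function.surjective_id, fun x => by simp [eq_comm]⟩
    (.zero _) h

end Filtered

lemma ModuleClass.IsExtClosed.of_filtered {p : ModuleClass.{u, v} A} (hp : IsExtClosed p)
    (hqp : ∀ (X : Type v) [AddCommGroup X] [Module A X], q X → p X)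
    {X : Type v} [AddCommGroup X] [Module A X] (h : Filtered q X) : p X := by
  induction h with
  | zero => exact hp.zero _
  | step h _ h'' ih => exact hp.ext h ih (hqp _ h'')

lemma Filtered.mono {q' : ModuleClass.{u, v} A}
    (hqq' : ∀ (X : Type v) [AddCommGroup X] [Module A X], q X → q' X)
    {X : Type v} [AddCommGroup X] [Module A X] (h : Filtered q X) : Filtered q' X :=
  isExtClosed.of_filtered (fun X _ _ hX => .of_mem (hqq' X hX)) h

/-- `S ⊆ T` is a step of a filtration with factor in `q`. -/
def filtrationStep (q : ModuleClass.{u, v} A) (M : Type v) [AddCommGroup M] [Module A M] :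
    SetRel (Submodule A M) (Submodule A M) :=
  {p | p.1 ≤ p.2 ∧ q (↥p.2 ⧸ p.1.comap p.2.subtype)}

variable {M N : Type v} [AddCommGroup M] [Module A M] [AddCommGroup N] [Module A N]

lemma Filtered.of_relSeries (s : RelSeries (filtrationStep q M)) (h₀ : s.head = ⊥)
    (h₁ : s.last = ⊤) : Filtered q M := by
  have key (i : Fin (s.length + 1)) : Filtered q (s i) := by
    induction i using Fin.induction with
    | zero =>
      have : Subsingleton (s 0) := by
        rw [show s 0 = ⊥ from h₀]
        infer_instance
      exact .zero _
    | succ i ih =>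
      obtain ⟨hle, hq⟩ := s.step i
      exact .step (.subtype_mkQ _) (ih.of_equiv (Submodule.comapSubtypeEquivOfLe hle).symm) hq
  have hM : Filtered q s.last := key (Fin.last _)
  rw [h₁] at hM
  exact hM.of_equiv Submodule.topEquiv

variable (hq : ∀ (X Y : Type v) [AddCommGroup X] [Module A X] [AddCommGroup Y] [Module A Y],
  (X ≃ₗ[A] Y) → q X → q Y)

include hq

lemma filtrationStep_map {f : M →ₗ[A] N} (hf : Function.Injective f) {S T : Submodule A M}
    (h : (S, T) ∈ filtrationStep q M) : (S.map f, T.map f) ∈ filtrationStep q N := by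
  refine ⟨Submodule.map_mono h.1, hq _ _ (Submodule.Quotient.equiv _ _
    (Submodule.equivMapOfInjective f hf T) ?_) h.2⟩
  ext ⟨_, x, hx, rfl⟩
  constructor
  · rintro ⟨y, hy, hyx⟩
    exact ⟨y, hy, congrArg Subtype.val hyx⟩
  · rintro ⟨y, hy, hyx⟩
    exact ⟨⟨x, hx⟩, (hf hyx ▸ hy : x ∈ S), rfl⟩

lemma Filtered.exists_relSeries (h : Filtered q M) :
    ∃ s : RelSeries (filtrationStep q M), s.head = ⊥ ∧ s.last = ⊤ := by
  induction h with
  | zero => exact ⟨.singleton _ ⊥, rfl, Subsingleton.elim _ _⟩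
  | @step _ _ _ _ _ _ _ _ _ f g h _ h'' ih =>
    obtain ⟨s, h₀, h₁⟩ := ih
    let s' := s.map ⟨Submodule.map f, filtrationStep_map hq h.injective⟩
    have hs' : s'.last = LinearMap.ker g := by
      simp [s', h₁, h.exact.linearMap_ker_eq]
    have hstep : (s'.last, ⊤) ∈ filtrationStep q _ := by
      refine ⟨le_top, hq _ _ ((Submodule.Quotient.equiv _ _ Submodule.topEquiv ?_).trans
        (g.quotKerEquivOfSurjective h.surjective)).symm h''⟩
      ext x
      simp [hs']
    refine ⟨s'.snoc ⊤ hstep, ?_, RelSeries.last_snoc ..⟩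
    rw [RelSeries.head_snoc, RelSeries.head_map, h₀]
    exact Submodule.map_bot f

lemma filtered_iff_exists_chain : Filtered q M ↔
    ∃ (n : ℕ) (c : Fin (n + 1) → Submodule A M), c 0 = ⊥ ∧ c (Fin.last n) = ⊤ ∧ Monotone c ∧
      ∀ i : Fin n, q (↥(c i.succ) ⧸ (Submodule.comap (c i.succ).subtype (c i.castSucc))) := by
  constructor
  · intro h
    obtain ⟨s, h₀, h₁⟩ := h.exists_relSeries hq
    exact ⟨s.length, s, h₀, h₁, Fin.monotone_iff_le_succ.2 fun i => (s.step i).1,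
      fun i => (s.step i).2⟩
  · rintro ⟨n, c, h₀, h₁, hc, hcq⟩
    exact .of_relSeries ⟨n, c, fun i => ⟨hc i.castSucc_lt_succ.le, hcq i⟩⟩ h₀ h₁

end Filtered

/-! ### Vanishing of `Hom` and of the first extension group -/

section ExtOne

open ModuleClass

variable {A : Type u} [Ring A] {Q X Y : Type v} [AddCommGroup Q] [Module A Q]
  [AddCommGroup X] [Module A X] [AddCommGroup Y] [Module A Y]

variable (A) in
/-- `Ext¹_A(Q, X) = 0`, in the form that every extension of `Q` by `X` splits. -/
def ExtOneVanishes (Q X : Type v) [AddCommGroup Q] [Module A Q] [AddCommGroup X] [Module A X] :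
    Prop :=
  ∀ ⦃E : Type v⦄ [AddCommGroup E] [Module A E] {i : X →ₗ[A] E} {q : E →ₗ[A] Q}, IsSES i q →
    ∃ s, q ∘ₗ s = LinearMap.id

namespace ExtOneVanishes

variable {X' X'' P : Type v} [AddCommGroup X'] [Module A X'] [AddCommGroup X''] [Module A X'']
  [AddCommGroup P] [Module A P] {f : X' →ₗ[A] X} {g : X →ₗ[A] X''}

lemma of_retraction (h : ∀ ⦃E : Type v⦄ [AddCommGroup E] [Module A E] {i : X →ₗ[A] E}
    {q : E →ₗ[A] Q}, IsSES i q → ∃ r, r ∘ₗ i = LinearMap.id) : ExtOneVanishes A Q X :=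
  fun _ _ _ _ _ hE => hE.exists_section_iff_exists_retraction.2 (h hE)

lemma exists_extend (h : ExtOneVanishes A X'' Y) (hfg : IsSES f g) (t : X' →ₗ[A] Y) :
    ∃ t', t' ∘ₗ f = t := by
  obtain ⟨E, _, _, i, q, t', hiq, ht'⟩ := hfg.exists_pushout t
  obtain ⟨r, hr⟩ := hiq.exists_section_iff_exists_retraction.1 (h hiq)
  exact ⟨r ∘ₗ t', by rw [LinearMap.comp_assoc, ht', ← LinearMap.comp_assoc, hr,
    LinearMap.id_comp]⟩

lemma exists_lift (h : ExtOneVanishes A Q X') (hfg : IsSES f g) (t : Q →ₗ[A] X'') :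
    ∃ t', g ∘ₗ t' = t := by
  obtain ⟨E, _, _, i, q, t', hiq, ht'⟩ := hfg.exists_pullback t
  obtain ⟨s, hs⟩ := h hiq
  exact ⟨t' ∘ₗ s, by rw [← LinearMap.comp_assoc, ht', LinearMap.comp_assoc, hs,
    LinearMap.comp_id]⟩

lemma of_projective [Module.Projective A P] : ExtOneVanishes A P X :=
  fun _ _ _ _ q hE => Module.projective_lifting_property q .id hE.surjective

lemma of_presentation [Module.Projective A P] {σ : X' →ₗ[A] P} {π : P →ₗ[A] Q} (hπ : IsSES σ π)
    (hX : ∀ t : X' →ₗ[A] X, ∃ t', t' ∘ₗ σ = t) : ExtOneVanishes A Q X := by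
  intro E _ _ i q hE
  obtain ⟨π', hπ'⟩ := Module.projective_lifting_property q π hE.surjective
  obtain ⟨t, ht⟩ := hE.exists_lift (π' ∘ₗ σ) (by
    rw [← LinearMap.comp_assoc, hπ', hπ.comp_eq_zero])
  obtain ⟨t', rfl⟩ := hX t
  obtain ⟨s, hs⟩ := hπ.exists_desc (π' - i ∘ₗ t') (by
    rw [LinearMap.sub_comp, LinearMap.comp_assoc, ht, sub_self])
  refine ⟨s, (LinearMap.cancel_right hπ.surjective).1 ?_⟩
  rw [LinearMap.comp_assoc, hs, LinearMap.comp_sub, hπ', ← LinearMap.comp_assoc, hE.comp_eq_zero,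
    LinearMap.zero_comp, sub_zero, LinearMap.id_comp]

lemma of_forall_exists_lift (h : ExtOneVanishes A Q X) (hfg : IsSES f g)
    (hlift : ∀ t : Q →ₗ[A] X'', ∃ t', g ∘ₗ t' = t) : ExtOneVanishes A Q X' := by
  refine of_retraction fun E _ _ i q hE => ?_
  obtain ⟨k, hk⟩ := h.exists_extend hE f
  obtain ⟨t, ht⟩ := hE.exists_desc (g ∘ₗ k) (by rw [LinearMap.comp_assoc, hk, hfg.comp_eq_zero])
  obtain ⟨t', rfl⟩ := hlift t
  obtain ⟨r, hr⟩ := hfg.exists_lift (k - t' ∘ₗ q) (by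
    rw [LinearMap.comp_sub, ← ht, LinearMap.comp_assoc, sub_self])
  refine ⟨r, (LinearMap.cancel_left hfg.injective).1 ?_⟩
  rw [← LinearMap.comp_assoc, hr, LinearMap.sub_comp, hk, LinearMap.comp_assoc, hE.comp_eq_zero,
    LinearMap.comp_zero, sub_zero, LinearMap.comp_id]

variable (A X) in
lemma isExtSummandClosed_left :
    IsExtSummandClosed.{u, v} (A := A) fun Q => ExtOneVanishes A Q X where
  zero Q _ _ _ := fun _ _ _ _ _ _ => ⟨0, Subsingleton.elim _ _⟩
  ext := by
    intro Q' Q Q'' _ _ _ _ _ _ a b hab h' h''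
    refine of_retraction fun E _ _ i q hE => ?_
    obtain ⟨K, _, _, k, j, p, hk, hjp, hkj⟩ := hE.exists_ker_comp hab
    obtain ⟨r, hr⟩ := hjp.exists_section_iff_exists_retraction.1 (h' hjp)
    obtain ⟨r', rfl⟩ := h''.exists_extend hk r
    exact ⟨r', by rw [← hkj, ← LinearMap.comp_assoc, hr]⟩
  retract := by
    intro Q P _ _ _ _ j r hrj h E _ _ i q hE
    obtain ⟨s, hs⟩ := h.exists_lift hE r
    exact ⟨s ∘ₗ j, by rw [← LinearMap.comp_assoc, hs, hrj]⟩

variable (A Q) in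
lemma isExtSummandClosed_right :
    IsExtSummandClosed.{u, v} (A := A) fun X => ExtOneVanishes A Q X where
  zero X _ _ _ := of_retraction fun _ _ _ _ _ _ => ⟨0, Subsingleton.elim _ _⟩
  ext := by
    intro X' X X'' _ _ _ _ _ _ f g hfg h' h'' E _ _ i q hE
    obtain ⟨W, _, _, c, j, p, hc, hjp, hpc⟩ := hfg.exists_coker_comp hE
    obtain ⟨s, hs⟩ := h'' hjp
    obtain ⟨s', rfl⟩ := h'.exists_lift hc s
    exact ⟨s', by rw [← hpc, LinearMap.comp_assoc, hs]⟩
  retract := by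
    intro X P _ _ _ _ j r hrj h
    refine of_retraction fun E _ _ i q hE => ?_
    obtain ⟨k, hk⟩ := h.exists_extend hE j
    exact ⟨r ∘ₗ k, by rw [LinearMap.comp_assoc, hk, hrj]⟩

end ExtOneVanishes

lemma isExtSummandClosed_subsingleton_hom_left (X : Type v) [AddCommGroup X] [Module A X] :
    IsExtSummandClosed.{u, v} (A := A) fun Q => Subsingleton (Q →ₗ[A] X) where
  zero Q _ _ _ := inferInstance
  ext := by
    intro Q' Q Q'' _ _ _ _ _ _ f g hfg _ _
    refine subsingleton_of_forall_eq 0 fun u => ?_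
    obtain ⟨v, rfl⟩ := hfg.exists_desc u (Subsingleton.elim _ _)
    rw [Subsingleton.elim v 0, LinearMap.zero_comp]
  retract := by
    intro Q P _ _ _ _ j r hrj _
    refine subsingleton_of_forall_eq 0 fun u => ?_
    rw [← u.comp_id, ← hrj, ← LinearMap.comp_assoc, Subsingleton.elim (u ∘ₗ r) 0,
      LinearMap.zero_comp]

lemma isExtSummandClosed_subsingleton_hom_right (Q : Type v) [AddCommGroup Q] [Module A Q] :
    IsExtSummandClosed.{u, v} (A := A) fun X => Subsingleton (Q →ₗ[A] X) where
  zero X _ _ _ := inferInstance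
  ext := by
    intro X' X X'' _ _ _ _ _ _ f g hfg _ _
    refine subsingleton_of_forall_eq 0 fun u => ?_
    obtain ⟨v, rfl⟩ := hfg.exists_lift u (Subsingleton.elim _ _)
    rw [Subsingleton.elim v 0, LinearMap.comp_zero]
  retract := by
    intro X P _ _ _ _ j r hrj _
    refine subsingleton_of_forall_eq 0 fun u => ?_
    rw [← u.id_comp, ← hrj, LinearMap.comp_assoc, Subsingleton.elim (j ∘ₗ u) 0,
      LinearMap.comp_zero]

lemma isExtSummandClosed_forall_exists_lift (φ : X →ₗ[A] Y) :
    IsExtSummandClosed.{u, v} (A := A) fun Q =>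
      ExtOneVanishes A Q X ∧ ∀ t : Q →ₗ[A] Y, ∃ t', φ ∘ₗ t' = t where
  zero Q _ _ _ :=
    ⟨(ExtOneVanishes.isExtSummandClosed_left A X).zero Q, fun _ => ⟨0, Subsingleton.elim _ _⟩⟩
  ext := by
    intro Q' Q Q'' _ _ _ _ _ _ f g hfg h' h''
    refine ⟨(ExtOneVanishes.isExtSummandClosed_left A X).ext hfg h'.1 h''.1, fun t => ?_⟩
    obtain ⟨a, ha⟩ := h'.2 (t ∘ₗ f)
    obtain ⟨b, rfl⟩ := h''.1.exists_extend hfg a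
    obtain ⟨c, hc⟩ := hfg.exists_desc (t - φ ∘ₗ b) (by
      rw [LinearMap.sub_comp, LinearMap.comp_assoc, ha, sub_self])
    obtain ⟨d, rfl⟩ := h''.2 c
    exact ⟨b + d ∘ₗ g, by rw [LinearMap.comp_add, ← LinearMap.comp_assoc, hc,
      add_sub_cancel]⟩
  retract := by
    intro Q P _ _ _ _ j r hrj h
    refine ⟨(ExtOneVanishes.isExtSummandClosed_left A X).retract hrj h.1, fun t => ?_⟩
    obtain ⟨a, ha⟩ := h.2 (t ∘ₗ r)
    exact ⟨a ∘ₗ j, by rw [← LinearMap.comp_assoc, ha, LinearMap.comp_assoc, hrj,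
      LinearMap.comp_id]⟩

end ExtOne

section ExtVanish

variable {A : Type} [Ring A] {Q X : Type} [AddCommGroup Q] [Module A Q] [AddCommGroup X]
  [Module A X]

lemma exists_d_comp_eq_of_extVanish (h : extVanish A Q X 1)
    (P : ProjectiveResolution (ModuleCat.of A Q)) (z : P.complex.X 1 ⟶ ModuleCat.of A X)
    (hz : P.complex.d 2 1 ≫ z = 0) : ∃ w, P.complex.d 1 0 ≫ w = z := by
  let K := P.complex.linearYonedaObj ℤ (ModuleCat.of A X)
  have hK : Subsingleton (K.homology 1) := by
    have : Subsingleton _ := h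
    exact (P.isoExt (R := ℤ) 1 (ModuleCat.of A X)).toLinearEquiv.symm.injective.subsingleton
  have hexact : K.ExactAt 1 := by
    rw [HomologicalComplex.exactAt_iff_isZero_homology]
    exact ModuleCat.isZero_of_subsingleton _
  rw [HomologicalComplex.exactAt_iff' _ 0 1 2 (by simp) (by simp),
    ShortComplex.moduleCat_exact_iff] at hexact
  exact hexact z hz

lemma ExtOneVanishes.of_extVanish (h : extVanish A Q X 1) : ExtOneVanishes A Q X := by
  let P := projectiveResolution (ModuleCat.of A Q)
  let π : P.complex.X 0 →ₗ[A] Q := (P.π.f 0).hom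
  have hπ : Function.Surjective π :=
    (ModuleCat.epi_iff_surjective (P.π.f 0)).1 inferInstance
  have hexact : ∀ x, π x = 0 → ∃ y, P.complex.d 1 0 y = x :=
    (ShortComplex.moduleCat_exact_iff _).1 P.exact₀
  have hπd (y : P.complex.X 1) : π (P.complex.d 1 0 y) = 0 :=
    ShortComplex.moduleCat_zero_apply (ShortComplex.mk _ _ P.complex_d_comp_π_f_zero) y
  have : Module.Projective A (P.complex.X 0) :=
    (IsProjective.iff_projective (P.complex.X 0)).2 (P.projective 0)
  refine .of_presentation (.ker_subtype π hπ) fun t => ?_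
  let d : P.complex.X 1 →ₗ[A] LinearMap.ker π := (P.complex.d 1 0).hom.codRestrict _ hπd
  have hd : Function.Surjective d := fun x =>
    (hexact x x.2).imp fun _ hy => Subtype.ext hy
  have hdd : d ∘ₗ (P.complex.d 2 1).hom = 0 := LinearMap.ext fun y =>
    Subtype.ext (congrArg (fun φ => φ.hom y) (P.complex.d_comp_d 2 1 0))
  obtain ⟨w, hw⟩ := exists_d_comp_eq_of_extVanish h P (ModuleCat.ofHom (t ∘ₗ d))
    (ModuleCat.hom_ext (by
      change (t ∘ₗ d) ∘ₗ (P.complex.d 2 1).hom = 0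
      rw [LinearMap.comp_assoc, hdd, LinearMap.comp_zero]))
  exact ⟨w.hom, (LinearMap.cancel_right hd).1 (congrArg ModuleCat.Hom.hom hw)⟩

end ExtVanish

/-! ### Finitely generated projective modules -/

section FiniteProjective

open ModuleClass

variable (R : Type w) [Ring R]

/-- The class of finitely generated projective modules, as an instance of `ModuleClass` so that the
closure properties and `Filtered` apply to it. -/
def IsFiniteProjective_s10 : ModuleClass.{w, v} R := fun X _ _ =>
  Module.Finite R X ∧ Module.Projective R X

lemma isExtSummandClosed_isFiniteProjective :
    IsExtSummandClosed (IsFiniteProjective_s10.{v, w} R) where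
  zero X _ _ _ := ⟨inferInstance, inferInstance⟩
  ext := by
    rintro X' X X'' _ _ _ _ _ _ f g hfg ⟨_, _⟩ ⟨_, _⟩
    obtain ⟨e⟩ := hfg.nonempty_equiv_prod (ExtOneVanishes.of_projective hfg)
    exact ⟨.equiv e.symm, .of_equiv e.symm⟩
  retract := by
    rintro X Y _ _ _ _ j r hrj ⟨_, _⟩
    exact ⟨.of_surjective r (LinearMap.surjective_of_comp_eq_id _ _ hrj), .of_split j r hrj⟩

variable {R}

lemma IsSES.isFiniteProjective_left {X' X X'' : Type v} [AddCommGroup X'] [Module R X']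
    [AddCommGroup X] [Module R X] [AddCommGroup X''] [Module R X''] {f : X' →ₗ[R] X}
    {g : X →ₗ[R] X''} (h : IsSES f g) (hX : IsFiniteProjective_s10 R X)
    [Module.Projective R X''] : IsFiniteProjective_s10 R X' :=
  let ⟨_, hr⟩ := h.exists_section_iff_exists_retraction.1 (ExtOneVanishes.of_projective h)
  (isExtSummandClosed_isFiniteProjective R).retract hr hX

lemma IsFiniteProjective_s10.exists_dual_family {U : Type v} [AddCommGroup U] [Module R U]
    (hU : IsFiniteProjective_s10 R U) :
    ∃ (n : ℕ) (b : Fin n → U) (σ : Fin n → U →ₗ[R] R), ∀ u, ∑ i, σ i u • b i = u := by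
  obtain ⟨_, _⟩ := hU
  obtain ⟨n, b, s, -, -, hbs⟩ := Module.Finite.exists_comp_eq_id_of_projective R U
  refine ⟨n, fun i => b fun j => if i = j then 1 else 0, fun i => LinearMap.proj i ∘ₗ s,
    fun u => ?_⟩
  exact (b.pi_apply_eq_sum_univ (s u)).symm.trans (LinearMap.congr_fun hbs u)

end FiniteProjective

section Hom

open ModuleClass

variable {R : Type w} [CommRing R] {A : Type u} [Ring A] [Algebra R A]

variable (R A) in
lemma exists_isScalarTower (X : Type v) [AddCommGroup X] [Module A X] :
    ∃ (_ : Module R X), IsScalarTower R A X :=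
  let := Module.compHom X (algebraMap R A)
  ⟨this, ⟨fun r a x => by rw [Algebra.smul_def, mul_smul]; rfl⟩⟩

variable (R A) in
/-- The class of `A`-modules that are finitely generated projective over `R`. An `A`-module has
exactly one compatible `R`-module structure; quantifying over it spares every module in a
construction from carrying one. -/
def IsFiniteProjectiveOver : ModuleClass.{u, v} A := fun X _ _ =>
  ∀ (_ : Module R X) (_ : IsScalarTower R A X), IsFiniteProjective_s10 R X

lemma IsFiniteProjective_s10.over {X : Type v} [AddCommGroup X] [Module A X] [inst : Module R X]
    [IsScalarTower R A X] (h : IsFiniteProjective_s10 R X) : IsFiniteProjectiveOver R A X := by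
  have hsmul (r : R) (x : X) : r • x = algebraMap R A r • x := (algebraMap_smul A r x).symm
  intro inst' _
  obtain rfl : inst = inst' := Module.ext' _ _ fun r x =>
    (hsmul r x).trans (algebraMap_smul A r x)
  exact h

variable (R A) in
lemma isExtSummandClosed_isFiniteProjectiveOver :
    IsExtSummandClosed (IsFiniteProjectiveOver.{u, v} R A) where
  zero X _ _ _ _ _ := (isExtSummandClosed_isFiniteProjective R).zero X
  ext := by
    intro X' X X'' _ _ _ _ _ _ f g hfg h' h'' _ _
    obtain ⟨_, _⟩ := exists_isScalarTower R A X'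
    obtain ⟨_, _⟩ := exists_isScalarTower R A X''
    exact (isExtSummandClosed_isFiniteProjective R).ext (f := f.restrictScalars R)
      (g := g.restrictScalars R) ⟨hfg.injective, hfg.surjective, hfg.exact⟩ (h' _ ‹_›) (h'' _ ‹_›)
  retract := by
    intro X Y _ _ _ _ j r hrj h _ _
    obtain ⟨_, _⟩ := exists_isScalarTower R A Y
    exact (isExtSummandClosed_isFiniteProjective R).retract (j := j.restrictScalars R)
      (r := r.restrictScalars R) (LinearMap.ext fun x => LinearMap.congr_fun hrj x) (h _ ‹_›)

variable {Q' Q Q'' X : Type v} [AddCommGroup Q'] [Module A Q'] [AddCommGroup Q] [Module A Q]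
  [AddCommGroup Q''] [Module A Q''] [AddCommGroup X] [Module A X] [Module R X]
  [IsScalarTower R A X]

variable (R) in
lemma ExtOneVanishes.isSES_lcomp {f : Q' →ₗ[A] Q} {g : Q →ₗ[A] Q''}
    (h : ExtOneVanishes A Q'' X) (hfg : IsSES f g) :
    IsSES (LinearMap.lcomp R X g) (LinearMap.lcomp R X f) where
  injective _ _ huv := (LinearMap.cancel_right hfg.surjective).1 huv
  surjective := h.exists_extend hfg
  exact u := by
    refine ⟨hfg.exists_desc u, ?_⟩
    rintro ⟨v, rfl⟩
    change (v ∘ₗ g) ∘ₗ f = 0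
    rw [LinearMap.comp_assoc, hfg.comp_eq_zero, LinearMap.comp_zero]

variable (R A X) in
/-- `Ext¹_A(Q, X) = 0` and `Hom_A(Q, X)` is finitely generated projective over `R`. The two
conditions together are inherited by extensions in `Q`, the second one alone is not. -/
def HasProjectiveHom : ModuleClass.{u, v} A := fun Q _ _ =>
  ExtOneVanishes A Q X ∧ IsFiniteProjective_s10 R (Q →ₗ[A] X)

variable (R A X) in
lemma isExtSummandClosed_hasProjectiveHom :
    IsExtSummandClosed (HasProjectiveHom R A X) where
  zero Q _ _ _ := ⟨(ExtOneVanishes.isExtSummandClosed_left A X).zero Q,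
    (isExtSummandClosed_isFiniteProjective R).zero _⟩
  ext hfg h' h'' := ⟨(ExtOneVanishes.isExtSummandClosed_left A X).ext hfg h'.1 h''.1,
    (isExtSummandClosed_isFiniteProjective R).ext (h''.1.isSES_lcomp R hfg) h''.2 h'.2⟩
  retract := by
    intro Q P _ _ _ _ j r hrj h
    refine ⟨(ExtOneVanishes.isExtSummandClosed_left A X).retract hrj h.1,
      (isExtSummandClosed_isFiniteProjective R).retract (j := LinearMap.lcomp R X r)
        (r := LinearMap.lcomp R X j) (LinearMap.ext fun u => ?_) h.2⟩
    change (u ∘ₗ r) ∘ₗ j = u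
    rw [LinearMap.comp_assoc, hrj, LinearMap.comp_id]

end Hom

/-! ### Tensor products with finitely generated projective modules -/

section Tensor

open ModuleClass TensorProduct

variable {R : Type w} [CommRing R] {A : Type u} [Ring A] [Algebra R A] {M U Q : Type v}
  [AddCommGroup M] [Module R M] [Module A M] [IsScalarTower R A M] [AddCommGroup U] [Module R U]
  [AddCommGroup Q] [Module A Q]

variable (R A M) in
/-- The `A`-linear map `M → M ⊗[R] U` given by `x ↦ x ⊗ u`, as a function of `u`. If `End_A(M) = R`
and `U` is finitely generated projective, it identifies `U` with `Hom_A(M, M ⊗[R] U)`. -/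
def tmulRight : U →ₗ[R] M →ₗ[A] M ⊗[R] U :=
  (AlgebraTensorModule.mk R A M U).flip

@[simp]
lemma tmulRight_apply (u : U) (x : M) : tmulRight R A M u x = x ⊗ₜ u :=
  rfl

variable (A M) in
/-- The `A`-linear map `M ⊗[R] U → M` given by `x ⊗ u ↦ σ u • x`. Letting `σ` run through a dual
basis of `U` decomposes `M ⊗[R] U`. -/
def tensorContract (σ : U →ₗ[R] R) : M ⊗[R] U →ₗ[A] M :=
  (AlgebraTensorModule.rid R A M).toLinearMap ∘ₗ AlgebraTensorModule.lTensor A M σ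

@[simp]
lemma tensorContract_tmul (σ : U →ₗ[R] R) (x : M) (u : U) :
    tensorContract A M σ (x ⊗ₜ u) = σ u • x := by
  simp [tensorContract]

lemma sum_tmulRight_tensorContract {n : ℕ} {b : Fin n → U} {σ : Fin n → U →ₗ[R] R}
    (hbσ : ∀ u, ∑ i, σ i u • b i = u) (z : M ⊗[R] U) :
    ∑ i, tmulRight R A M (b i) (tensorContract A M (σ i) z) = z := by
  induction z with
  | zero => simp
  | tmul x u =>
    simp only [tmulRight_apply, tensorContract_tmul, smul_tmul]
    rw [← tmul_sum, hbσ]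
  | add y z hy hz => simp only [map_add, Finset.sum_add_distrib, hy, hz]

lemma ModuleClass.IsExtSummandClosed.tensor {p : ModuleClass.{u, v} A} (hp : IsExtSummandClosed p)
    (hU : IsFiniteProjective_s10 R U) (hM : p M) : p (M ⊗[R] U) := by
  obtain ⟨n, b, σ, hbσ⟩ := hU.exists_dual_family
  refine hp.retract (j := LinearMap.pi fun i => tensorContract A M (σ i))
    (r := ∑ i, tmulRight R A M (b i) ∘ₗ LinearMap.proj i) (LinearMap.ext fun z => ?_)
    (hp.pi (fun _ : Fin n => M) fun _ => hM)
  rw [LinearMap.comp_apply, LinearMap.sum_apply]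
  exact sum_tmulRight_tensorContract hbσ z

lemma exists_tmulRight_comp_eq (hU : IsFiniteProjective_s10 R U) {ε : Q →ₗ[A] M}
    (hε : ∀ f : Q →ₗ[A] M, ∃ r : R, r • ε = f) (f : Q →ₗ[A] M ⊗[R] U) :
    ∃ u, tmulRight R A M u ∘ₗ ε = f := by
  obtain ⟨n, b, σ, hbσ⟩ := hU.exists_dual_family
  choose r hr using fun i => hε (tensorContract A M (σ i) ∘ₗ f)
  refine ⟨∑ i, r i • b i, LinearMap.ext fun x => ?_⟩
  have hrx (i : Fin n) : r i • ε x = tensorContract A M (σ i) (f x) := LinearMap.congr_fun (hr i) x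
  calc ε x ⊗ₜ[R] ∑ i, r i • b i = ∑ i, tmulRight R A M (b i) (r i • ε x) := by
        simp only [tmul_sum, tmulRight_apply, smul_tmul]
    _ = f x := by simpa only [hrx] using sum_tmulRight_tensorContract hbσ (f x)

lemma eq_zero_of_tmulRight_comp_eq_zero (hU : IsFiniteProjective_s10 R U) {ε : Q →ₗ[A] M}
    (hε : ∀ r : R, r • ε = 0 → r = 0) {u : U} (hu : tmulRight R A M u ∘ₗ ε = 0) : u = 0 := by
  obtain ⟨n, b, σ, hbσ⟩ := hU.exists_dual_family
  have hσ (i : Fin n) : σ i u = 0 := hε _ <| LinearMap.ext fun x => by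
    simpa using congrArg (tensorContract A M (σ i)) (LinearMap.congr_fun hu x)
  rw [← hbσ u]
  simp [hσ]

end Tensor

/-! ### Universal extensions -/

section UniversalExtension

variable {A : Type u} [Ring A] {K P D M : Type v} [AddCommGroup K] [Module A K] [AddCommGroup P]
  [Module A P] [AddCommGroup D] [Module A D] [AddCommGroup M] [Module A M]
  {σ : K →ₗ[A] P} {π : P →ₗ[A] D}

lemma IsSES.compLeft (h : IsSES σ π) (ι : Type) : IsSES (σ.compLeft ι) (π.compLeft ι) where
  injective := h.injective.comp_left
  surjective := h.surjective.comp_left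
  exact x := by
    simp only [funext_iff, Set.mem_range, LinearMap.compLeft_apply, Function.comp_apply,
      Pi.zero_apply, h.exact _, Classical.skolem]

variable {R : Type w} [CommRing R] [Algebra R A] [Module R M] [IsScalarTower R A M]

lemma IsSES.exists_extension_forall_extends (h : IsSES σ π)
    (hM : Module.Finite R (K →ₗ[A] M)) :
    ∃ (n : ℕ) (X : Type v) (_ : AddCommGroup X) (_ : Module A X) (i : M →ₗ[A] X)
      (q : X →ₗ[A] Fin n → D), IsSES i q ∧ ∀ t : K →ₗ[A] M, ∃ t', t' ∘ₗ σ = i ∘ₗ t := by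
  obtain ⟨n, b, hb⟩ := Module.Finite.exists_fin (R := R) (M := K →ₗ[A] M)
  obtain ⟨X, _, _, i, q, τ, hiq, hτ⟩ :=
    (h.compLeft (Fin n)).exists_pushout (∑ j, b j ∘ₗ LinearMap.proj j)
  obtain ⟨_, _⟩ := exists_isScalarTower R A X
  refine ⟨n, X, _, _, i, q, hiq, fun t => ?_⟩
  have ht : t ∈ Submodule.span R (Set.range b) := hb ▸ Submodule.mem_top
  induction ht using Submodule.span_induction with
  | mem _ hj =>
    obtain ⟨j, rfl⟩ := hj
    refine ⟨τ ∘ₗ LinearMap.single A (fun _ => P) j, LinearMap.ext fun x => ?_⟩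
    have hσ : Pi.single j (σ x) = σ.compLeft (Fin n) (Pi.single j x) :=
      Pi.single_op (fun _ => σ) (fun _ => map_zero σ) j x
    calc τ (Pi.single j (σ x)) = i (∑ k, b k (Pi.single (M := fun _ => K) j x k)) := by
          rw [hσ, ← LinearMap.comp_apply, hτ]
          simp
      _ = i (b j x) := by rw [Finset.sum_eq_single j] <;> simp +contextual
  | zero => exact ⟨0, by simp⟩
  | add _ _ _ _ ht₁ ht₂ =>
    obtain ⟨t₁, ht₁⟩ := ht₁
    obtain ⟨t₂, ht₂⟩ := ht₂
    exact ⟨t₁ + t₂, by rw [LinearMap.add_comp, ht₁, ht₂, LinearMap.comp_add]⟩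
  | smul r _ _ ht =>
    obtain ⟨t', ht⟩ := ht
    exact ⟨r • t', LinearMap.ext fun x => by
      simpa using congrArg (r • ·) (LinearMap.congr_fun ht x)⟩

lemma IsSES.exists_universal_extension [Module.Projective A P] (h : IsSES σ π)
    (hM : Module.Finite R (K →ₗ[A] M)) (hD : ExtOneVanishes A D D) :
    ∃ (n : ℕ) (X : Type v) (_ : AddCommGroup X) (_ : Module A X) (i : M →ₗ[A] X)
      (q : X →ₗ[A] Fin n → D), IsSES i q ∧ ExtOneVanishes A D X := by
  obtain ⟨n, X, _, _, i, q, hiq, hext⟩ := h.exists_extension_forall_extends hM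
  refine ⟨n, X, _, _, i, q, hiq, .of_presentation h fun t => ?_⟩
  have hDn : ExtOneVanishes A D (Fin n → D) :=
    (ExtOneVanishes.isExtSummandClosed_right A D).pi _ fun _ => hD
  obtain ⟨a, ha⟩ := hDn.exists_extend h (q ∘ₗ t)
  obtain ⟨b, rfl⟩ := Module.projective_lifting_property q a hiq.surjective
  obtain ⟨c, hc⟩ := hiq.exists_lift (t - b ∘ₗ σ) (by
    rw [LinearMap.comp_sub, ← LinearMap.comp_assoc, ha, sub_self])
  obtain ⟨d, hd⟩ := hext c
  exact ⟨b + d, by rw [LinearMap.add_comp, hd, hc, add_sub_cancel]⟩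

end UniversalExtension

/-! ### Factors of filtrations -/

section Factor

open ModuleClass

variable (R : Type) [CommRing R] (A : Type) [Ring A] [Algebra R A] {Λ : Type}

/-- `X` is isomorphic to `N l ⊗[R] U` for some `l ∈ S` and some finitely generated projective
`U`. This is `TensorFactor` as a property, so that it can serve as a class of factors. -/
def IsTensorFactor (N : Λ → Type) [∀ l, AddCommGroup (N l)] [∀ l, Module R (N l)]
    [∀ l, Module A (N l)] [∀ l, IsScalarTower R A (N l)] (S : Set Λ) : ModuleClass.{0, 0} A :=
  fun X _ _ => Nonempty (TensorFactor R A Λ N S X)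

/-- `X` is isomorphic to `N l` for some `l ∈ S`. This is `PlainFactor` as a property, so that it
can serve as a class of factors. -/
def IsPlainFactor (N : Λ → Type) [∀ l, AddCommGroup (N l)] [∀ l, Module A (N l)] (S : Set Λ) :
    ModuleClass.{0, 0} A :=
  fun X _ _ => Nonempty (PlainFactor A Λ N S X)

variable {R A} {N : Λ → Type} [∀ l, AddCommGroup (N l)] [∀ l, Module R (N l)]
  [∀ l, Module A (N l)] {S : Set Λ} {M : Type} [AddCommGroup M] [Module A M]

lemma inFiltPlain_iff : InFiltPlain A Λ N S M ↔
    Module.Finite A M ∧ Filtered (IsPlainFactor A N S) M :=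
  and_congr_right' (filtered_iff_exists_chain (q := IsPlainFactor A N S) fun _ _ _ _ _ _ e ⟨t⟩ =>
    ⟨t.lam, t.mem, e.symm.trans t.iso⟩).symm

variable [∀ l, IsScalarTower R A (N l)]

lemma inFilt_iff : InFilt R A Λ N S M ↔
    Module.Finite A M ∧ Filtered (IsTensorFactor R A N S) M :=
  and_congr_right' (filtered_iff_exists_chain (q := IsTensorFactor R A N S) fun _ _ _ _ _ _ e ⟨t⟩ =>
    ⟨t.lam, t.mem, t.U, t.fin, t.proj, e.symm.trans t.iso⟩).symm

lemma isPlainFactor_self {l : Λ} (hl : l ∈ S) : IsPlainFactor A N S (N l) :=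
  ⟨l, hl, .refl A _⟩

lemma isTensorFactor_tensor {l : Λ} (hl : l ∈ S) {U : Type} [AddCommGroup U] [Module R U]
    (hU : IsFiniteProjective_s10 R U) : IsTensorFactor R A N S (N l ⊗[R] U) :=
  ⟨l, hl, .of R U, hU.1, hU.2, .refl A _⟩

lemma IsPlainFactor.isTensorFactor (h : IsPlainFactor A N S M) : IsTensorFactor R A N S M :=
  let ⟨t⟩ := h
  ⟨t.lam, t.mem, .of R R, inferInstanceAs (Module.Finite R R),
    inferInstanceAs (Module.Projective R R),
    t.iso.trans (TensorProduct.AlgebraTensorModule.rid R A (N t.lam)).symm⟩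

lemma ModuleClass.IsExtSummandClosed.of_filtered_isTensorFactor {p : ModuleClass.{0, 0} A}
    (hp : IsExtSummandClosed p) (hN : ∀ l ∈ S, p (N l))
    (hM : Filtered (IsTensorFactor R A N S) M) : p M :=
  hp.of_filtered (fun _ _ _ ⟨t⟩ => hp.of_equiv t.iso.symm
    (hp.tensor ⟨t.fin, t.proj⟩ (hN _ t.mem))) hM

end Factor

/-! ### Standard modules -/

namespace SplitQH

open ModuleClass

variable {R : Type} [CommRing R] {A : Type} [Ring A] [Algebra R A] {Λ : Type} [PartialOrder Λ]
  {Δ : Λ → Type} [∀ l, AddCommGroup (Δ l)] [∀ l, Module R (Δ l)] [∀ l, Module A (Δ l)]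
  [∀ l, IsScalarTower R A (Δ l)] {p : ModuleClass.{0, 0} A} {l m : Λ}
  {X Y : Type} [AddCommGroup X] [Module A X] [AddCommGroup Y] [Module A Y]

lemma of_ker_epi (h : SplitQH R A Λ Δ) (hp : IsExtSummandClosed p) (hΔ : ∀ m, l < m → p (Δ m)) :
    p (LinearMap.ker (h.epi l)) :=
  hp.of_filtered_isTensorFactor hΔ (inFilt_iff.1 (h.ker_filt l)).2

lemma of_P (h : SplitQH R A Λ Δ) (hp : IsExtSummandClosed p) (hΔ : ∀ m, l ≤ m → p (Δ m)) :
    p (h.P l) :=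
  hp.ext (.ker_subtype _ (h.epi_surj l)) (h.of_ker_epi hp fun m hm => hΔ m hm.le) (hΔ l le_rfl)

lemma of_regular [Finite Λ] (h : SplitQH R A Λ Δ) (hp : IsExtSummandClosed p)
    (hΔ : ∀ l, p (Δ l)) : p A := by
  obtain ⟨n, j, r, hrj⟩ := h.add_gen (.of A A) (inferInstanceAs (Module.Finite A A))
    (inferInstanceAs (Module.Projective A A))
  exact hp.retract (X := A) hrj
    (hp.pi _ fun _ => hp.pi _ fun l => h.of_P hp fun m _ => hΔ m)

lemma subsingleton_of_hom [Finite Λ] (h : SplitQH R A Λ Δ)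
    (hX : ∀ l, Subsingleton (Δ l →ₗ[A] X)) : Subsingleton X :=
  have := h.of_regular (isExtSummandClosed_subsingleton_hom_left X) hX
  (LinearMap.toSpanSingleton_injective A X).subsingleton

lemma surjective_of_forall_exists_lift [Finite Λ] (h : SplitQH R A Λ Δ) {φ : X →ₗ[A] Y}
    (hX : ∀ l, ExtOneVanishes A (Δ l) X)
    (hφ : ∀ l, ∀ t : Δ l →ₗ[A] Y, ∃ t', φ ∘ₗ t' = t) : Function.Surjective φ := fun y => by
  obtain ⟨t, ht⟩ := (h.of_regular (isExtSummandClosed_forall_exists_lift φ)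
    fun l => ⟨hX l, hφ l⟩).2 (LinearMap.toSpanSingleton A Y y)
  exact ⟨t 1, by simpa using LinearMap.congr_fun ht 1⟩

lemma subsingleton_P_hom (h : SplitQH R A Λ Δ)
    (hX : ∀ m, l ≤ m → Subsingleton (Δ m →ₗ[A] X)) : Subsingleton (h.P l →ₗ[A] X) :=
  h.of_P (isExtSummandClosed_subsingleton_hom_left X) hX

lemma exists_comp_epi_eq (h : SplitQH R A Λ Δ) (hX : ∀ m, l < m → Subsingleton (Δ m →ₗ[A] X))
    (f : h.P l →ₗ[A] X) : ∃ u, u ∘ₗ h.epi l = f :=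
  have := h.of_ker_epi (isExtSummandClosed_subsingleton_hom_left X) hX
  (IsSES.ker_subtype _ (h.epi_surj l)).exists_desc f (Subsingleton.elim _ _)

lemma subsingleton_delta_hom (h : SplitQH R A Λ Δ) (hlm : ¬ l ≤ m) :
    Subsingleton (Δ l →ₗ[A] Δ m) :=
  subsingleton_of_forall_eq 0 fun f => by_contra fun hf => hlm (h.hom_le l m ⟨f, hf⟩)

lemma subsingleton_P_hom_delta (h : SplitQH R A Λ Δ) (hlm : ¬ l ≤ m) :
    Subsingleton (h.P l →ₗ[A] Δ m) :=
  h.subsingleton_P_hom fun _ hk => h.subsingleton_delta_hom fun hm => hlm (hk.trans hm)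

lemma extOneVanishes_delta (h : SplitQH R A Λ Δ) (hlm : ¬ l < m) :
    ExtOneVanishes A (Δ l) (Δ m) := by
  have := h.P_proj l
  have := h.of_ker_epi (isExtSummandClosed_subsingleton_hom_left (Δ m)) fun k hk =>
    h.subsingleton_delta_hom fun hkm => hlm (hk.trans_le hkm)
  exact .of_presentation (.ker_subtype _ (h.epi_surj l)) fun t => ⟨0, Subsingleton.elim _ _⟩

lemma exists_smul_id_eq (h : SplitQH R A Λ Δ) (f : Δ l →ₗ[A] Δ l) :
    ∃ r : R, r • LinearMap.id = f := by
  obtain ⟨e⟩ := h.endIso l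
  refine ⟨e f, e.injective ?_⟩
  change e (algebraMap R (Module.End A (Δ l)) (e f)) = e f
  exact e.commutes (e f)

lemma exists_smul_epi_eq (h : SplitQH R A Λ Δ) (f : h.P l →ₗ[A] Δ l) :
    ∃ r : R, r • h.epi l = f := by
  obtain ⟨u, rfl⟩ := h.exists_comp_epi_eq (fun m hm => h.subsingleton_delta_hom hm.not_ge) f
  exact (h.exists_smul_id_eq u).imp fun r hr => by
    rw [← hr, LinearMap.smul_comp, LinearMap.id_comp]

lemma isFiniteProjective_P (h : SplitQH R A Λ Δ) (l : Λ) : IsFiniteProjective_s10 A (h.P l) :=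
  ⟨h.P_fin l, h.P_proj l⟩

lemma isFiniteProjective_delta (h : SplitQH R A Λ Δ) (l : Λ) : IsFiniteProjective_s10 R (Δ l) :=
  ⟨h.deltaFinR l, h.deltaProjR l⟩

lemma isFiniteProjectiveOver_of_filtered (h : SplitQH R A Λ Δ) {S : Set Λ}
    (hX : Filtered (IsTensorFactor R A Δ S) X) : IsFiniteProjectiveOver R A X :=
  (isExtSummandClosed_isFiniteProjectiveOver R A).of_filtered_isTensorFactor
    (fun l _ => (h.isFiniteProjective_delta l).over) hX

variable [Module R X] [IsScalarTower R A X]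

lemma hasProjectiveHom_P (h : SplitQH R A Λ Δ) (hX : IsFiniteProjective_s10 R X) (l : Λ) :
    HasProjectiveHom R A X (h.P l) := by
  have := h.P_proj l
  have := h.P_fin l
  have hA : HasProjectiveHom R A X A := ⟨.of_projective,
    (isExtSummandClosed_isFiniteProjective R).of_equiv (LinearMap.ringLmapEquivSelf A R X).symm hX⟩
  obtain ⟨n, b, s, -, -, hbs⟩ := Module.Finite.exists_comp_eq_id_of_projective A (h.P l)
  have hp := isExtSummandClosed_hasProjectiveHom R A X
  exact hp.retract hbs (hp.pi _ fun _ => hA)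

lemma hasProjectiveHom_delta [Finite Λ] (h : SplitQH R A Λ Δ) (hX : IsFiniteProjective_s10 R X)
    (hΔ : ∀ m, l ≤ m → ExtOneVanishes A (Δ m) X) : HasProjectiveHom R A X (Δ l) := by
  induction l using WellFoundedGT.induction with
  | ind l ih =>
    have hker := h.of_ker_epi (isExtSummandClosed_hasProjectiveHom R A X) fun m hm =>
      ih m hm fun k hk => hΔ k (hm.le.trans hk)
    have := hker.2.2
    have hses := (hΔ l le_rfl).isSES_lcomp R (.ker_subtype _ (h.epi_surj l))
    exact ⟨hΔ l le_rfl, hses.isFiniteProjective_left (h.hasProjectiveHom_P hX l).2⟩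

lemma isFiniteProjective_ker_epi_hom [Finite Λ] (h : SplitQH R A Λ Δ)
    (hX : IsFiniteProjective_s10 R X) (hΔ : ∀ m, l < m → ExtOneVanishes A (Δ m) X) :
    IsFiniteProjective_s10 R (LinearMap.ker (h.epi l) →ₗ[A] X) :=
  (h.of_ker_epi (isExtSummandClosed_hasProjectiveHom R A X) fun _ hm =>
    h.hasProjectiveHom_delta hX fun k hk => hΔ k (hm.trans_le hk)).2

end SplitQH

/-! ### Embeddings with relatively injective target -/

namespace SplitQH

open ModuleClass

variable {R : Type} [CommRing R] {A : Type} [Ring A] [Algebra R A] {Λ : Type} [PartialOrder Λ]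
  [Finite Λ] {Δ : Λ → Type} [∀ l, AddCommGroup (Δ l)] [∀ l, Module R (Δ l)]
  [∀ l, Module A (Δ l)] [∀ l, IsScalarTower R A (Δ l)]

lemma exists_extension_extOneVanishes (h : SplitQH R A Λ Δ) {M : Type} [AddCommGroup M]
    [Module R M] [Module A M] [IsScalarTower R A M] (hM : IsFiniteProjective_s10 R M) {l : Λ}
    (hl : ∀ m, l < m → ExtOneVanishes A (Δ m) M) :
    ∃ (n : ℕ) (X : Type) (_ : AddCommGroup X) (_ : Module A X) (i : M →ₗ[A] X)
      (q : X →ₗ[A] Fin n → Δ l), IsSES i q ∧ ExtOneVanishes A (Δ l) X ∧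
        ∀ m, ¬ m < l → ExtOneVanishes A (Δ m) M → ExtOneVanishes A (Δ m) X := by
  have := h.P_proj l
  obtain ⟨n, X, _, _, i, q, hiq, hX⟩ := IsSES.exists_universal_extension
    (.ker_subtype _ (h.epi_surj l)) (h.isFiniteProjective_ker_epi_hom hM hl).1
    (h.extOneVanishes_delta (lt_irrefl l))
  refine ⟨n, X, _, _, i, q, hiq, hX, fun m hml hm => ?_⟩
  have hright := ExtOneVanishes.isExtSummandClosed_right A (Δ m)
  exact hright.ext hiq hm (hright.pi _ fun _ => h.extOneVanishes_delta hml)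

lemma exists_isSES_filtered_extOneVanishes (h : SplitQH R A Λ Δ) {M : Type} [AddCommGroup M]
    [Module A M] (hM : IsFiniteProjectiveOver R A M) {S : Finset Λ}
    (hS : IsUpperSet (S : Set Λ)) :
    ∃ (X : Type) (_ : AddCommGroup X) (_ : Module A X) (C : Type) (_ : AddCommGroup C)
      (_ : Module A C) (i : M →ₗ[A] X) (q : X →ₗ[A] C), IsSES i q ∧
        Filtered (IsPlainFactor A Δ Set.univ) C ∧ ∀ m ∈ S, ExtOneVanishes A (Δ m) X := by
  classical
  induction S using Finset.strongInduction with
  | H S ih =>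
  obtain rfl | hne := S.eq_empty_or_nonempty
  · exact ⟨M, _, _, PUnit, _, _, .id, 0, ⟨Function.injective_id,
      Function.surjective_to_subsingleton _, fun x => iff_of_true rfl ⟨x, rfl⟩⟩, .zero _, by simp⟩
  obtain ⟨l, hlS, hl⟩ := S.exists_minimal hne
  have hlt {m : Λ} (hm : m ∈ S) : ¬ m < l := fun hml => hml.not_ge (hl hm hml.le)
  obtain ⟨X, _, _, C, _, _, i, q, hiq, hC, hX⟩ := ih (S.erase l) (S.erase_ssubset hlS)
    fun a b hab ha => by
      obtain ⟨hal, haS⟩ := Finset.mem_erase.1 ha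
      exact Finset.mem_erase.2
        ⟨fun hb => hal ((hab.trans hb.le).eq_of_not_lt (hlt haS)), hS hab haS⟩
  obtain ⟨_, _⟩ := exists_isScalarTower R A X
  have hXR : IsFiniteProjective_s10 R X :=
    (isExtSummandClosed_isFiniteProjectiveOver R A).ext hiq hM
      (h.isFiniteProjectiveOver_of_filtered (hC.mono fun _ _ _ h => h.isTensorFactor)) _ ‹_›
  obtain ⟨n, Y, _, _, j, r, hjr, hYl, hY⟩ := h.exists_extension_extOneVanishes hXR
    (l := l) fun m hm => hX m (Finset.mem_erase.2 ⟨hm.ne', hS hm.le hlS⟩)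
  obtain ⟨W, _, _, c, a, b, hc, hab, -⟩ := hiq.exists_coker_comp hjr
  refine ⟨Y, _, _, W, _, _, j ∘ₗ i, c, hc, Filtered.isExtClosed.ext hab hC
    (Filtered.isExtClosed.pi _ fun _ => .of_mem (isPlainFactor_self (Set.mem_univ l))),
    fun m hm => ?_⟩
  obtain rfl | hml := eq_or_ne m l
  · exact hYl
  · exact hY m (hlt hm) (hX m (Finset.mem_erase.2 ⟨hml, hm⟩))

end SplitQH

/-! ### Elements annihilated by a trace ideal -/

section TraceTorsion

variable {A : Type u} [Ring A] {P : Type v} [AddCommGroup P] [Module A P]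
  {X : Type*} [AddCommGroup X] [Module A X] {Y : Type*} [AddCommGroup Y] [Module A Y]

lemma subsingleton_hom_of_injective {i : X →ₗ[A] Y} (hi : Function.Injective i)
    [Subsingleton (P →ₗ[A] Y)] : Subsingleton (P →ₗ[A] X) :=
  ⟨fun _ _ => (LinearMap.cancel_left hi).1 (Subsingleton.elim _ _)⟩

lemma subsingleton_hom_of_surjective {π : X →ₗ[A] Y} (hπ : Function.Surjective π)
    [Subsingleton (X →ₗ[A] P)] : Subsingleton (Y →ₗ[A] P) :=
  ⟨fun _ _ => (LinearMap.cancel_right hπ).1 (Subsingleton.elim _ _)⟩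

variable (A P X) in
/-- The submodule of elements annihilated by the trace ideal of `P`. For finitely generated
projective `P` it is the largest submodule to which `P` has no nonzero map. -/
def traceTorsion : Submodule A X where
  carrier := {x | ∀ (f : P →ₗ[A] A) (p : P), f p • x = 0}
  zero_mem' f p := smul_zero _
  add_mem' hx hy f p := by rw [smul_add, hx f p, hy f p, add_zero]
  smul_mem' a x hx f p := by
    rw [← mul_smul]
    exact hx (LinearMap.toSpanSingleton A A a ∘ₗ f) p

lemma mem_traceTorsion {x : X} : x ∈ traceTorsion A P X ↔ ∀ (f : P →ₗ[A] A) p, f p • x = 0 :=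
  Iff.rfl

lemma traceTorsion_eq_top [Subsingleton (P →ₗ[A] X)] : traceTorsion A P X = ⊤ :=
  eq_top_iff.2 fun x _ f p => LinearMap.congr_fun
    (Subsingleton.elim (LinearMap.toSpanSingleton A X x ∘ₗ f) 0) p

lemma comap_traceTorsion {i : X →ₗ[A] Y} (hi : Function.Injective i) :
    (traceTorsion A P Y).comap i = traceTorsion A P X := by
  ext x
  simp only [Submodule.mem_comap, mem_traceTorsion, ← map_smul, map_eq_zero_iff i hi]

lemma map_mem_traceTorsion (f : X →ₗ[A] Y) {x : X} (hx : x ∈ traceTorsion A P X) :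
    f x ∈ traceTorsion A P Y := fun g p => by
  rw [← map_smul, hx, map_zero]

lemma subsingleton_hom_of_traceTorsion_eq_bot (hX : Subsingleton (P →ₗ[A] X))
    (hY : traceTorsion A P Y = ⊥) : Subsingleton (X →ₗ[A] Y) :=
  subsingleton_of_forall_eq 0 fun f => LinearMap.ext fun x => by
    have hx : x ∈ traceTorsion A P X := by
      rw [traceTorsion_eq_top (P := P) (X := X)]
      exact Submodule.mem_top
    have hfx := map_mem_traceTorsion f hx
    rwa [hY, Submodule.mem_bot] at hfx

lemma subsingleton_hom_traceTorsion (hP : IsFiniteProjective_s10 A P) :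
    Subsingleton (P →ₗ[A] traceTorsion A P X) := by
  obtain ⟨n, b, σ, hbσ⟩ := hP.exists_dual_family
  refine subsingleton_of_forall_eq 0 fun g => LinearMap.ext fun p => ?_
  rw [← hbσ p, map_sum]
  exact Finset.sum_eq_zero fun i _ => Subtype.ext (by simpa using (g (b i)).2 (σ i) p)

lemma traceTorsion_quotient (hP : IsFiniteProjective_s10 A P) :
    traceTorsion A P (X ⧸ traceTorsion A P X) = ⊥ := by
  obtain ⟨n, b, σ, hbσ⟩ := hP.exists_dual_family
  refine eq_bot_iff.2 fun x hx => ?_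
  induction x using Submodule.Quotient.induction_on with
  | H x =>
    have hmem (f : P →ₗ[A] A) (p : P) : f p • x ∈ traceTorsion A P X :=
      (Submodule.Quotient.mk_eq_zero _).1 (hx f p)
    refine (Submodule.Quotient.mk_eq_zero _).2 fun f p => ?_
    have hfp : f p = ∑ i, σ i p * f (b i) := by
      conv_lhs => rw [← hbσ p]
      simp only [map_sum, map_smul, smul_eq_mul]
    rw [hfp, Finset.sum_smul]
    exact Finset.sum_eq_zero fun i _ => by rw [mul_smul, hmem f (b i)]

end TraceTorsion

/-! ### The costandard filtration -/

namespace SplitQH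

open ModuleClass TensorProduct

variable {R : Type} [CommRing R] {A : Type} [Ring A] [Algebra R A] {Λ : Type} [PartialOrder Λ]
  [Finite Λ] {Δ : Λ → Type} [∀ l, AddCommGroup (Δ l)] [∀ l, Module R (Δ l)]
  [∀ l, Module A (Δ l)] [∀ l, IsScalarTower R A (Δ l)] {l : Λ}
  {X Y Q : Type} [AddCommGroup X] [Module A X] [AddCommGroup Y] [Module A Y] [AddCommGroup Q]
  [Module A Q]

lemma traceTorsion_P_eq_bot (h : SplitQH R A Λ Δ)
    (hY : ∀ m, m ≠ l → Subsingleton (Δ m →ₗ[A] Y)) : traceTorsion A (h.P l) Y = ⊥ := by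
  refine (Submodule.subsingleton_iff_eq_bot).1 (h.subsingleton_of_hom fun m => ?_)
  obtain rfl | hml := eq_or_ne m l
  · have := subsingleton_hom_traceTorsion (X := Y) (h.isFiniteProjective_P m)
    exact subsingleton_hom_of_surjective (h.epi_surj m)
  · have := hY m hml
    exact subsingleton_hom_of_injective (Submodule.injective_subtype _)

lemma extOneVanishes_of_subsingleton_P_hom (h : SplitQH R A Λ Δ)
    (hY : ∀ m, m ≠ l → Subsingleton (Δ m →ₗ[A] Y)) (hYext : ∀ m, ExtOneVanishes A (Δ m) Y)
    (hQ : ∀ m, l ≤ m → Subsingleton (h.P m →ₗ[A] Q)) : ExtOneVanishes A Q Y := by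
  -- Dividing `E` by its `P l`-torsion gives back `Y`, and the quotient map is a retraction of `i`.
  refine .of_retraction fun E _ _ i q hiq => ?_
  have hPl := h.isFiniteProjective_P l
  let Z := traceTorsion A (h.P l) E
  have hinj : Function.Injective (Z.mkQ ∘ₗ i) := by
    rw [← LinearMap.ker_eq_bot, LinearMap.ker_comp, Submodule.ker_mkQ,
      comap_traceTorsion hiq.injective, h.traceTorsion_P_eq_bot hY]
  have hsurj : Function.Surjective (Z.mkQ ∘ₗ i) := by
    refine h.surjective_of_forall_exists_lift hYext fun m t => ?_
    by_cases hlm : l ≤ m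
    · have := h.P_proj m
      obtain ⟨s, hs⟩ := Module.projective_lifting_property Z.mkQ (t ∘ₗ h.epi m) Z.mkQ_surjective
      have := hQ m hlm
      obtain ⟨s', rfl⟩ := hiq.exists_lift s (Subsingleton.elim _ _)
      obtain ⟨t', rfl⟩ := h.exists_comp_epi_eq (fun k hk => hY k (hlm.trans_lt hk).ne') s'
      exact ⟨t', (LinearMap.cancel_right (h.epi_surj m)).1 hs⟩
    · have := subsingleton_hom_of_traceTorsion_eq_bot (h.subsingleton_P_hom_delta hlm)
        (traceTorsion_quotient (X := E) hPl)
      exact ⟨0, Subsingleton.elim _ _⟩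
  let e := LinearEquiv.ofBijective _ ⟨hinj, hsurj⟩
  exact ⟨e.symm.toLinearMap ∘ₗ Z.mkQ, LinearMap.ext fun y => e.symm_apply_apply y⟩

lemma exists_comp_eq_of_subsingleton_P_hom (h : SplitQH R A Λ Δ)
    (hY : ∀ m, m ≠ l → Subsingleton (Δ m →ₗ[A] Y)) (hYext : ∀ m, ExtOneVanishes A (Δ m) Y)
    {α : Q →ₗ[A] X} (hker : Subsingleton (h.P l →ₗ[A] LinearMap.ker α))
    (hcoker : ∀ m, l ≤ m → Subsingleton (h.P m →ₗ[A] X ⧸ LinearMap.range α)) (β : Q →ₗ[A] Y) :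
    ∃ φ, φ ∘ₗ α = β := by
  have := subsingleton_hom_of_traceTorsion_eq_bot hker (h.traceTorsion_P_eq_bot hY)
  obtain ⟨γ, rfl⟩ := (IsSES.ker_subtype α.rangeRestrict α.surjective_rangeRestrict).exists_desc β
    (by
      rw [LinearMap.ker_rangeRestrict]
      exact Subsingleton.elim _ _)
  obtain ⟨φ, rfl⟩ := (h.extOneVanishes_of_subsingleton_P_hom hY hYext hcoker).exists_extend
    (.subtype_mkQ (LinearMap.range α)) γ
  exact ⟨φ, rfl⟩

end SplitQH

section Costandard

open TensorProduct

variable {R : Type} [CommRing R] {A : Type} [Ring A] [Algebra R A] {Λ : Type}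
  {Δ : Λ → Type} [∀ l, AddCommGroup (Δ l)] [∀ l, Module A (Δ l)]
  {N : Λ → Type} [∀ l, AddCommGroup (N l)] [∀ l, Module R (N l)]
  [∀ l, Module A (N l)] [∀ l, IsScalarTower R A (N l)]

variable (R A Δ N) in
/-- The part of the orthogonality relations between standard modules `Δ` and costandard modules
`N` that the construction of filtrations by the `N l` uses. -/
structure IsExtOrthogonal : Prop where
  hom_self : ∀ l, Nonempty ((Δ l →ₗ[A] N l) ≃ₗ[R] R)
  hom_eq_zero : ∀ l m, l ≠ m → Subsingleton (Δ l →ₗ[A] N m)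
  ext_eq_zero : ∀ l m, ExtOneVanishes A (Δ l) (N m)

namespace IsExtOrthogonal

lemma exists_generator (h : IsExtOrthogonal R A Δ N) (l : Λ) : ∃ ε : Δ l →ₗ[A] N l,
    (∀ f, ∃ r : R, r • ε = f) ∧ ∀ r : R, r • ε = 0 → r = 0 := by
  obtain ⟨e⟩ := h.hom_self l
  refine ⟨e.symm 1, fun f => ⟨e f, ?_⟩, fun r hr => ?_⟩
  · rw [← map_smul, smul_eq_mul, mul_one, e.symm_apply_apply]
  · simpa [← map_smul] using hr

variable {U : Type} [AddCommGroup U] [Module R U]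

lemma subsingleton_hom_tensor (h : IsExtOrthogonal R A Δ N) (hU : IsFiniteProjective_s10 R U)
    {l m : Λ} (hlm : l ≠ m) : Subsingleton (Δ l →ₗ[A] N m ⊗[R] U) :=
  (isExtSummandClosed_subsingleton_hom_right (Δ l)).tensor hU (h.hom_eq_zero l m hlm)

lemma extOneVanishes_tensor (h : IsExtOrthogonal R A Δ N) (hU : IsFiniteProjective_s10 R U)
    (l m : Λ) : ExtOneVanishes A (Δ l) (N m ⊗[R] U) :=
  (ExtOneVanishes.isExtSummandClosed_right A (Δ l)).tensor hU (h.ext_eq_zero l m)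

end IsExtOrthogonal

variable [∀ l, Module R (Δ l)] [∀ l, IsScalarTower R A (Δ l)]

lemma IsCostandard.isExtOrthogonal [PartialOrder Λ] (h : IsCostandard R A Λ Δ N) :
    IsExtOrthogonal R A Δ N where
  hom_self := h.2.1
  hom_eq_zero l m hlm := subsingleton_of_forall_eq 0 (h.2.2.1 l m hlm)
  ext_eq_zero l m := .of_extVanish (h.2.2.2 l m 1 one_pos)

variable {T : Type} [AddCommGroup T] [Module R T] [Module A T] [IsScalarTower R A T]

variable (R A T) in
/-- The evaluation map `D ⊗[R] Hom_A(D, T) → T`. For `D = Δ l` it compares the part of `T` that the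
weight `l` contributes with `T` itself. -/
def tensorHomEval (D : Type) [AddCommGroup D] [Module R D] [Module A D] [IsScalarTower R A D] :
    D ⊗[R] (D →ₗ[A] T) →ₗ[A] T :=
  AlgebraTensorModule.lift
    { toFun := fun x => ⟨⟨fun u => u x, fun _ _ => rfl⟩, fun _ _ => rfl⟩
      map_add' := fun x y => LinearMap.ext fun u => map_add u x y
      map_smul' := fun a x => LinearMap.ext fun u => map_smul u a x }

lemma tensorHomEval_comp_tmulRight {D : Type} [AddCommGroup D] [Module R D] [Module A D]
    [IsScalarTower R A D] (u : D →ₗ[A] T) : tensorHomEval R A T D ∘ₗ tmulRight R A D u = u :=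
  LinearMap.ext fun _ => rfl

namespace SplitQH

variable [PartialOrder Λ]

lemma subsingleton_P_hom_ker_tensorHomEval (h : SplitQH R A Λ Δ) {l : Λ}
    (hT : IsFiniteProjective_s10 R (Δ l →ₗ[A] T)) :
    Subsingleton (h.P l →ₗ[A] LinearMap.ker (tensorHomEval R A T (Δ l))) := by
  refine subsingleton_of_forall_eq 0 fun g => ?_
  obtain ⟨u, hu⟩ := exists_tmulRight_comp_eq hT (fun f => h.exists_smul_epi_eq f)
    ((LinearMap.ker _).subtype ∘ₗ g)
  have hu0 : u = 0 := (LinearMap.cancel_right (h.epi_surj l)).1 <| by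
    calc u ∘ₗ h.epi l
        = tensorHomEval R A T (Δ l) ∘ₗ tmulRight R A (Δ l) u ∘ₗ h.epi l := by
          rw [← LinearMap.comp_assoc, tensorHomEval_comp_tmulRight]
      _ = 0 ∘ₗ h.epi l := by
          rw [hu, ← LinearMap.comp_assoc, LinearMap.comp_ker_subtype, LinearMap.zero_comp,
            LinearMap.zero_comp]
  refine (LinearMap.cancel_left (Submodule.injective_subtype _)).1 ?_
  rw [← hu, hu0, map_zero, LinearMap.zero_comp, LinearMap.comp_zero]

lemma subsingleton_P_hom_quotient_range_tensorHomEval (h : SplitQH R A Λ Δ) {l : Λ}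
    (hT : ∀ m, l < m → Subsingleton (Δ m →ₗ[A] T)) {m : Λ} (hlm : l ≤ m) :
    Subsingleton (h.P m →ₗ[A] T ⧸ LinearMap.range (tensorHomEval R A T (Δ l))) := by
  refine subsingleton_of_forall_eq 0 fun f => ?_
  have := h.P_proj m
  obtain ⟨g, rfl⟩ := Module.projective_lifting_property _ f
    (LinearMap.range (tensorHomEval R A T (Δ l))).mkQ_surjective
  obtain ⟨u, rfl⟩ := h.exists_comp_epi_eq (fun k hk => hT k (hlm.trans_lt hk)) g
  obtain rfl | hlm := hlm.eq_or_lt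
  · rw [← tensorHomEval_comp_tmulRight (R := R) u, LinearMap.comp_assoc, ← LinearMap.comp_assoc,
      LinearMap.range_mkQ_comp, LinearMap.zero_comp]
  · have := hT m hlm
    rw [Subsingleton.elim u 0, LinearMap.zero_comp, LinearMap.comp_zero]

variable [Finite Λ]

lemma exists_comp_eq_tmulRight_comp (h : SplitQH R A Λ Δ) (hN : IsExtOrthogonal R A Δ N) {l : Λ}
    (hTl : IsFiniteProjective_s10 R (Δ l →ₗ[A] T)) (hT : ∀ m, l < m → Subsingleton (Δ m →ₗ[A] T))
    (ε : Δ l →ₗ[A] N l) :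
    ∃ φ : T →ₗ[A] N l ⊗[R] (Δ l →ₗ[A] T), ∀ u, φ ∘ₗ u = tmulRight R A (N l) u ∘ₗ ε := by
  obtain ⟨φ, hφ⟩ := h.exists_comp_eq_of_subsingleton_P_hom
    (fun m hml => hN.subsingleton_hom_tensor hTl hml) (fun m => hN.extOneVanishes_tensor hTl m l)
    (h.subsingleton_P_hom_ker_tensorHomEval hTl)
    (fun m => h.subsingleton_P_hom_quotient_range_tensorHomEval hT)
    (AlgebraTensorModule.map ε LinearMap.id)
  refine ⟨φ, fun u => ?_⟩
  conv_lhs => rw [← tensorHomEval_comp_tmulRight (R := R) u, ← LinearMap.comp_assoc, hφ]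
  exact LinearMap.ext fun _ => rfl

lemma exists_isSES_tensor (h : SplitQH R A Λ Δ) (hN : IsExtOrthogonal R A Δ N) {l : Λ}
    (hT : ∀ m, HasProjectiveHom R A T (Δ m)) (hTl : ∀ m, l < m → Subsingleton (Δ m →ₗ[A] T)) :
    ∃ φ : T →ₗ[A] N l ⊗[R] (Δ l →ₗ[A] T), Function.Surjective φ ∧
      (∀ m, HasProjectiveHom R A (LinearMap.ker φ) (Δ m)) ∧
      Subsingleton (Δ l →ₗ[A] LinearMap.ker φ) := by
  obtain ⟨ε, hε, hε0⟩ := hN.exists_generator l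
  obtain ⟨φ, hφ⟩ := h.exists_comp_eq_tmulRight_comp hN (hT l).2 hTl ε
  have hlift (m : Λ) (t : Δ m →ₗ[A] N l ⊗[R] (Δ l →ₗ[A] T)) : ∃ t', φ ∘ₗ t' = t := by
    obtain rfl | hml := eq_or_ne m l
    · obtain ⟨u, rfl⟩ := exists_tmulRight_comp_eq (hT m).2 hε t
      exact ⟨u, hφ u⟩
    · have := hN.subsingleton_hom_tensor (hT l).2 hml
      exact ⟨0, Subsingleton.elim _ _⟩
  have hsurj := h.surjective_of_forall_exists_lift (fun m => (hT m).1) hlift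
  have hses := IsSES.ker_subtype φ hsurj
  have hl : Subsingleton (Δ l →ₗ[A] LinearMap.ker φ) := subsingleton_of_forall_eq 0 fun v =>
    (LinearMap.cancel_left hses.injective).1 <| by
      rw [LinearMap.comp_zero]
      refine eq_zero_of_tmulRight_comp_eq_zero (hT l).2 hε0 ?_
      rw [← hφ, ← LinearMap.comp_assoc, hses.comp_eq_zero, LinearMap.zero_comp]
  refine ⟨φ, hsurj, fun m => ⟨.of_forall_exists_lift (hT m).1 hses (hlift m), ?_⟩, hl⟩
  obtain rfl | hml := eq_or_ne m l
  · exact (isExtSummandClosed_isFiniteProjective R).zero _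
  · have := hN.subsingleton_hom_tensor (hT l).2 hml
    refine (isExtSummandClosed_isFiniteProjective R).of_equiv (LinearEquiv.ofBijective
      (LinearMap.compRight R (LinearMap.ker φ).subtype) ⟨fun _ _ huv =>
        (LinearMap.cancel_left hses.injective).1 huv, fun u =>
          hses.exists_lift u (Subsingleton.elim _ _)⟩).symm (hT m).2

lemma filtered_isTensorFactor_of_forall_notMem (h : SplitQH R A Λ Δ)
    (hN : IsExtOrthogonal R A Δ N) (S : Finset Λ) (hT : ∀ m, HasProjectiveHom R A T (Δ m))
    (hS : ∀ m ∉ S, Subsingleton (Δ m →ₗ[A] T)) : Filtered (IsTensorFactor R A N Set.univ) T := by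
  classical
  induction S using Finset.strongInduction generalizing T with
  | H S ih =>
  obtain rfl | hne := S.eq_empty_or_nonempty
  · have := h.subsingleton_of_hom fun m => hS m (Finset.notMem_empty m)
    exact .zero T
  obtain ⟨l, hl⟩ := S.exists_maximal hne
  obtain ⟨φ, hφ, hker, hkerl⟩ := h.exists_isSES_tensor hN hT fun m hm =>
    hS m fun hmS => hm.not_ge (hl.2 hmS hm.le)
  refine .step (.ker_subtype φ hφ) (ih _ (S.erase_ssubset hl.1) hker fun m hm => ?_)
    (isTensorFactor_tensor (Set.mem_univ l) (hT l).2)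
  obtain rfl | hml := eq_or_ne m l
  · exact hkerl
  · have := hS m fun hmS => hm (Finset.mem_erase.2 ⟨hml, hmS⟩)
    exact subsingleton_hom_of_injective (Submodule.injective_subtype _)

lemma filtered_isTensorFactor (h : SplitQH R A Λ Δ) (hN : IsExtOrthogonal R A Δ N)
    (hT : ∀ m, HasProjectiveHom R A T (Δ m)) : Filtered (IsTensorFactor R A N Set.univ) T :=
  h.filtered_isTensorFactor_of_forall_notMem hN (Set.finite_univ.toFinset) hT (by simp)

end SplitQH

end Costandard

theorem embedding_into_partial_tilting_general {R : Type} [CommRing R] {A : Type} [Ring A]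
    [Algebra R A] {Λ : Type} [Finite Λ] [PartialOrder Λ]
    {Δ : Λ → Type} [∀ l, AddCommGroup (Δ l)] [∀ l, Module R (Δ l)] [∀ l, Module A (Δ l)]
    [∀ l, IsScalarTower R A (Δ l)]
    {N : Λ → Type} [∀ l, AddCommGroup (N l)] [∀ l, Module R (N l)] [∀ l, Module A (N l)]
    [∀ l, IsScalarTower R A (N l)]
    (h : SplitQH R A Λ Δ) (hN : IsExtOrthogonal R A Δ N)
    {M : Type} [AddCommGroup M] [Module A M] (hM : InFilt R A Λ Δ Set.univ M) :
    ∃ T : ModuleCat.{0} A,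
      (InFilt R A Λ Δ Set.univ T ∧ InFilt R A Λ N Set.univ T) ∧
      ∃ i : M →ₗ[A] T, Function.Injective i ∧
        InFiltPlain A Λ Δ Set.univ ((T : Type) ⧸ LinearMap.range i) := by
  have hMΔ := (inFilt_iff.1 hM).2
  obtain ⟨T, _, _, C, _, _, i, q, hiq, hC, hT⟩ := h.exists_isSES_filtered_extOneVanishes
    (h.isFiniteProjectiveOver_of_filtered hMΔ) (S := Set.finite_univ.toFinset)
    (by simpa using isUpperSet_univ)
  have hTΔ : Filtered (IsTensorFactor R A Δ Set.univ) T :=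
    Filtered.isExtClosed.ext hiq hMΔ (hC.mono fun _ _ _ hX => hX.isTensorFactor)
  obtain ⟨_, _⟩ := exists_isScalarTower R A T
  have hTR : IsFiniteProjective_s10 R T := h.isFiniteProjectiveOver_of_filtered hTΔ _ ‹_›
  have hTN := h.filtered_isTensorFactor hN fun l =>
    h.hasProjectiveHom_delta hTR fun m _ => hT m (by simp)
  have := hTR.1
  have hTA : Module.Finite A T := .of_restrictScalars_finite R A T
  exact ⟨.of A T, ⟨inFilt_iff.2 ⟨hTA, hTΔ⟩, inFilt_iff.2 ⟨hTA, hTN⟩⟩, i, hiq.injective,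
    inFiltPlain_iff.2 ⟨inferInstance,
      hC.of_equiv (hiq.exact.linearEquivOfSurjective hiq.surjective).symm⟩⟩

noncomputable section

/-- For each `M ∈ F(Δ̃)` there is a partial tilting module `T_M`
(i.e. `T_M ∈ F(Δ̃) ∩ F(∇̃)`) and a monomorphism `i_M : M → T_M` whose cokernel lies in
`F(Δ)`, the category of modules filtered by standard modules. -/
theorem embedding_into_partial_tilting
    (R : Type) [CommRing R] [IsNoetherianRing R]
    (A : Type) [Ring A] [Algebra R A]
    (Λ : Type) [Fintype Λ] [PartialOrder Λ]
    (Δ : Λ → Type) [∀ l, AddCommGroup (Δ l)] [∀ l, Module R (Δ l)]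
    [∀ l, Module A (Δ l)] [∀ l, IsScalarTower R A (Δ l)]
    (Nb : Λ → Type) [∀ l, AddCommGroup (Nb l)] [∀ l, Module R (Nb l)]
    [∀ l, Module A (Nb l)] [∀ l, IsScalarTower R A (Nb l)]
    (h : SplitQH R A Λ Δ) (hc : IsCostandard R A Λ Δ Nb)
    (M : Type) [AddCommGroup M] [Module A M] (hM : InFilt R A Λ Δ Set.univ M) :
    ∃ T : ModuleCat.{0} A,
      (InFilt R A Λ Δ Set.univ T ∧ InFilt R A Λ Nb Set.univ T) ∧
      ∃ i : M →ₗ[A] T, Function.Injective i ∧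
        InFiltPlain A Λ Δ Set.univ ((T : Type) ⧸ LinearMap.range i) :=
  embedding_into_partial_tilting_general h hc.isExtOrthogonal hM

end
end
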